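/- arXiv:1604.00888 — 8 statements merged into one kernel-verified Lean document; each statement's English description precedes it below -/
import Mathlib

section
/- Let G be a finite simple graph with at least 3 vertices. If the minimum degree δ(G) is at least the bipartite-hole-number α̃(G), then G is Hamiltonian. -/
/-- An `(s, t)`-bipartite-hole in a graph `G` consists of two disjoint sets of vertices
`S` and `T` with `|S| = s` and `|T| = t` such that there are no edges between `S` and `T`. -/
def SimpleGraph.HasBipartiteHole {V : Type*} (G : SimpleGraph V) (s t : ℕ) : Prop :=
  ∃ S T : Finset V, Disjoint S T ∧ S.card = s ∧ T.card = t ∧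
    ∀ a ∈ S, ∀ b ∈ T, ¬ G.Adj a b

/-- The bipartite-hole-number `α̃(G)`: the least integer `r` which may be written as
`r = s + t - 1` for some positive integers `s` and `t` such that `G` does not contain an
`(s, t)`-bipartite-hole. -/
noncomputable def SimpleGraph.biHoleNumber {V : Type*} (G : SimpleGraph V) : ℕ :=
  sInf {r : ℕ | ∃ s t : ℕ, 0 < s ∧ 0 < t ∧ r = s + t - 1 ∧ ¬ G.HasBipartiteHole s t}

/-!
Take a longest path `v₀ … vₙ`; all neighbours of its ends lie on it. If its vertices did not span a
cycle, then two Pósa rotations, one at each end, would forbid every edge `vᵢ vⱼ₊₁` with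
`v₀ ∼ vᵢ₊₁`, `vₙ ∼ vⱼ`, `i < j`, and every edge `vᵢ₊₂ vⱼ₊₁` with `v₀ ∼ vᵢ₊₁`, `vₙ ∼ vⱼ`, `j ≤ i`.
Choose `m` with at least `s` such `i` up to `m` and at least `t` from `m` on. Either at least `t` of
the `j` exceed `m`, or at least `s` do not, and in both cases there is an `(s, t)`-bipartite-hole.
So the path closes up to a cycle; a graph without the hole and with large degrees is connected, so a
vertex off the cycle would give a longer path.
-/

open SimpleGraph Finset

section BipartiteHole

variable {V ι κ : Type*} {G : SimpleGraph V} {s t : ℕ}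

lemma hasBipartiteHole_of_injOn {f : ι → V} {g : κ → V} {I : Finset ι} {J : Finset κ}
    (hf : Set.InjOn f I) (hg : Set.InjOn g J) (hs : s ≤ #I) (ht : t ≤ #J)
    (hne : ∀ i ∈ I, ∀ j ∈ J, f i ≠ g j) (hadj : ∀ i ∈ I, ∀ j ∈ J, ¬ G.Adj (f i) (g j)) :
    G.HasBipartiteHole s t := by
  classical
  obtain ⟨I', hI', rfl⟩ := exists_subset_card_eq hs
  obtain ⟨J', hJ', rfl⟩ := exists_subset_card_eq ht
  refine ⟨I'.image f, J'.image g, ?_, card_image_of_injOn (hf.mono hI'),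
    card_image_of_injOn (hg.mono hJ'), ?_⟩
  · simp only [Finset.disjoint_left, mem_image]
    rintro _ ⟨i, hi, rfl⟩ ⟨j, hj, hji⟩
    exact hne i (hI' hi) j (hJ' hj) hji.symm
  · simp only [mem_image]
    rintro _ ⟨i, hi, rfl⟩ _ ⟨j, hj, rfl⟩
    exact hadj i (hI' hi) j (hJ' hj)

lemma exists_biHoleNumber_eq_and_not_hasBipartiteHole [Finite V] (G : SimpleGraph V) :
    ∃ s t : ℕ, 0 < s ∧ 0 < t ∧ G.biHoleNumber = s + t - 1 ∧ ¬ G.HasBipartiteHole s t := by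
  have := Fintype.ofFinite V
  refine Nat.sInf_mem
    (s := {r | ∃ s t : ℕ, 0 < s ∧ 0 < t ∧ r = s + t - 1 ∧ ¬ G.HasBipartiteHole s t})
    ⟨_, 1, Fintype.card V + 1, one_pos, Nat.succ_pos _, rfl, ?_⟩
  rintro ⟨S, T, -, -, hT, -⟩
  have := T.card_le_univ
  omega

lemma reachable_of_not_hasBipartiteHole {u v : V} [Fintype (G.neighborSet u)]
    [Fintype (G.neighborSet v)] (hole : ¬ G.HasBipartiteHole s t)
    (hs : s ≤ G.degree u) (ht : t ≤ G.degree v) : G.Reachable u v := by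
  contrapose! hole
  have not_reachable (x) (hx : x ∈ G.neighborFinset u) (y) (hy : y ∈ G.neighborFinset v) :
      ¬ G.Reachable x y := fun hxy =>
    hole <| ((G.mem_neighborFinset u x).1 hx).reachable.trans <|
      hxy.trans ((G.mem_neighborFinset v y).1 hy).symm.reachable
  exact hasBipartiteHole_of_injOn (f := id) (g := id) (Set.injOn_id _) (Set.injOn_id _) hs ht
    (fun x hx y hy (hxy : x = y) => not_reachable x hx y hy (hxy ▸ Reachable.refl x))
    (fun x hx y hy hxy => not_reachable x hx y hy hxy.reachable)

end BipartiteHole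

lemma exists_le_card_filter_le_and_le_card_filter_ge {α : Type*} [LinearOrder α] {s t : ℕ}
    (hs : 0 < s) (ht : 0 < t) {X : Finset α} (hX : s + t - 1 ≤ #X) :
    ∃ m, s ≤ #{x ∈ X | x ≤ m} ∧ t ≤ #{x ∈ X | m ≤ x} := by
  let e := X.orderEmbOfFin rfl
  have hlt : s - 1 < #X := by omega
  let k : Fin #X := ⟨s - 1, hlt⟩
  refine ⟨e k, ?_, ?_⟩
  · calc s = #(Iic k) := by rw [Fin.card_Iic, Nat.sub_add_cancel hs]
      _ ≤ #{x ∈ X | x ≤ e k} := card_le_card_of_injOn e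
        (fun i hi => mem_filter.2 ⟨X.orderEmbOfFin_mem rfl i, e.monotone (mem_Iic.1 hi)⟩)
        e.injective.injOn
  · calc t ≤ #(Ici k) := by rw [Fin.card_Ici]; dsimp only [k]; omega
      _ ≤ #{x ∈ X | e k ≤ x} := card_le_card_of_injOn e
        (fun i hi => mem_filter.2 ⟨X.orderEmbOfFin_mem rfl i, e.monotone (mem_Ici.1 hi)⟩)
        e.injective.injOn

lemma degree_le_card_of_forall_adj_exists {V ι : Type*} {G : SimpleGraph V} {w : V}
    [Fintype (G.neighborSet w)] {f : ι → V} {I : Finset ι}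
    (h : ∀ x, G.Adj w x → ∃ i ∈ I, f i = x) : G.degree w ≤ #I := by
  rw [← G.card_neighborFinset_eq_degree]
  exact card_le_card_of_surjOn f fun x hx => h x ((G.mem_neighborFinset w x).1 hx)

section Walks

variable {V : Type*} {G : SimpleGraph V} {u v : V}

lemma support_take_append_support_drop_succ (p : G.Walk u v) {i : ℕ} (hi : i < p.length) :
    (p.take i).support ++ (p.drop (i + 1)).support = p.support := by
  rw [Walk.support_take, Walk.drop_support_eq_support_drop_min, min_eq_left hi,
    List.take_append_drop]

lemma lt_length_of_adj_getVert {p : G.Walk u v} {j : ℕ} (h : G.Adj v (p.getVert j)) :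
    j < p.length := by
  by_contra! hj
  rw [p.getVert_of_length_le hj] at h
  exact G.irrefl h

/-- Pósa rotation at the end of a walk: `v₀ … vⱼ vⱼ₊₁ … vₙ` with `vⱼ` adjacent to `vₙ` becomes
`v₀ … vⱼ vₙ … vⱼ₊₁`. -/
def rotateEnd (p : G.Walk u v) (j : ℕ) (h : G.Adj v (p.getVert j)) :
    G.Walk u (p.getVert (j + 1)) :=
  (p.take j).append (.cons h.symm (p.drop (j + 1)).reverse)

/-- Pósa rotation at the start of a walk: `v₀ … vᵢ vᵢ₊₁ … vₙ` with `v₀` adjacent to `vᵢ₊₁` becomes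
`vᵢ … v₀ vᵢ₊₁ … vₙ`. -/
def rotateStart (p : G.Walk u v) (i : ℕ) (h : G.Adj u (p.getVert (i + 1))) :
    G.Walk (p.getVert i) v :=
  (p.take i).reverse.append (.cons h (p.drop (i + 1)))

lemma support_rotateEnd_perm (p : G.Walk u v) {j : ℕ}
    (h : G.Adj v (p.getVert j)) : (rotateEnd p j h).support.Perm p.support := by
  rw [← support_take_append_support_drop_succ p (lt_length_of_adj_getVert h), rotateEnd,
    Walk.support_append, Walk.support_cons, List.tail_cons, Walk.support_reverse]
  exact (List.reverse_perm _).append_left _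

lemma support_rotateStart_perm (p : G.Walk u v) {i : ℕ} (hi : i < p.length)
    (h : G.Adj u (p.getVert (i + 1))) : (rotateStart p i h).support.Perm p.support := by
  rw [← support_take_append_support_drop_succ p hi, rotateStart, Walk.support_append,
    Walk.support_cons, List.tail_cons, Walk.support_reverse]
  exact (List.reverse_perm _).append_right _

lemma length_eq_of_support_perm {a b : V} {p : G.Walk u v} {q : G.Walk a b}
    (h : q.support.Perm p.support) : q.length = p.length := by
  simpa only [Walk.length_support, Nat.add_right_cancel_iff] using h.length_eq

lemma getVert_rotateEnd_of_le (p : G.Walk u v) {i j : ℕ} (hij : i ≤ j)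
    (h : G.Adj v (p.getVert j)) : (rotateEnd p j h).getVert i = p.getVert i := by
  have hj := lt_length_of_adj_getVert h
  rw [rotateEnd, Walk.getVert_append', Walk.take_length, if_pos (by omega), Walk.take_getVert,
    min_eq_right hij]

lemma getVert_rotateEnd_of_lt (p : G.Walk u v) {i j : ℕ} (hij : j < i) (hi : i ≤ p.length)
    (h : G.Adj v (p.getVert j)) :
    (rotateEnd p j h).getVert i = p.getVert (p.length + j + 1 - i) := by
  rw [rotateEnd, Walk.getVert_append', Walk.take_length, min_eq_left (by omega), if_neg (by omega),
    Walk.getVert_cons _ _ (by omega), Walk.getVert_reverse, Walk.drop_length, Walk.drop_getVert]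
  congr 1
  omega

/-- The vertices of the walk `p` can be rearranged into a walk with adjacent ends. For a path `p`
on at least three vertices this means that some cycle of `G` has the same vertex set as `p`. -/
def IsClosable (p : G.Walk u v) : Prop :=
  ∃ (a b : V) (q : G.Walk a b), q.support.Perm p.support ∧ G.Adj b a

lemma IsClosable.exists_walk_from {p : G.Walk u v} (hp : IsClosable p) {x : V}
    (hx : x ∈ p.support) : ∃ (y : V) (q : G.Walk x y), q.support.Perm p.support := by
  classical
  obtain ⟨a, b, q, hqp, hba⟩ := hp
  have hx' : x ∈ (Walk.cons hba q).support := List.mem_cons_of_mem _ (hqp.mem_iff.2 hx)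
  let c := (Walk.cons hba q).rotate x hx'
  have hc : ¬ c.Nil := by simp [c]
  refine ⟨_, c.tail.reverse, ?_⟩
  rw [Walk.support_reverse, Walk.support_tail_of_not_nil c hc]
  exact (List.reverse_perm _).trans (((Walk.support_rotate _ x hx').perm).trans hqp)

-- The cycle is `vᵢ … v₀ vᵢ₊₁ … vⱼ vₙ … vⱼ₊₁`.
lemma isClosable_of_adj_of_lt {p : G.Walk u v} {i j : ℕ} (hij : i < j)
    (hu : G.Adj u (p.getVert (i + 1))) (hv : G.Adj v (p.getVert j))
    (hadj : G.Adj (p.getVert i) (p.getVert (j + 1))) : IsClosable p := by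
  let q := rotateEnd p j hv
  have hqp : q.support.Perm p.support := support_rotateEnd_perm p hv
  have hqu : G.Adj u (q.getVert (i + 1)) := by rwa [getVert_rotateEnd_of_le p hij]
  refine ⟨_, _, rotateStart q i hqu, (support_rotateStart_perm q ?_ hqu).trans hqp, ?_⟩
  · rw [length_eq_of_support_perm hqp]
    exact hij.trans (lt_length_of_adj_getVert hv)
  · rw [getVert_rotateEnd_of_le p hij.le]
    exact hadj.symm

-- The cycle is `vᵢ₊₂ … vₙ vⱼ … v₀ vᵢ₊₁ … vⱼ₊₁`.
lemma isClosable_of_adj_of_le {p : G.Walk u v} {i j : ℕ} (hji : j ≤ i) (hi : i + 1 < p.length)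
    (hu : G.Adj u (p.getVert (i + 1))) (hv : G.Adj v (p.getVert j))
    (hadj : G.Adj (p.getVert (j + 1)) (p.getVert (i + 2))) : IsClosable p := by
  let q := rotateEnd p j hv
  have hqp : q.support.Perm p.support := support_rotateEnd_perm p hv
  let k := p.length + j - (i + 1)
  have hqk : q.getVert k = p.getVert (i + 2) := by
    rw [getVert_rotateEnd_of_lt p (by omega) (by omega)]
    congr 1
    omega
  have hqk' : q.getVert (k + 1) = p.getVert (i + 1) := by
    rw [getVert_rotateEnd_of_lt p (by omega) (by omega)]
    congr 1
    omega
  have hqu : G.Adj u (q.getVert (k + 1)) := by rwa [hqk']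
  refine ⟨_, _, rotateStart q k hqu, (support_rotateStart_perm q ?_ hqu).trans hqp, ?_⟩
  · rw [length_eq_of_support_perm hqp]
    omega
  · rwa [hqk]

lemma degree_start_le_card_filter_adj [Fintype (G.neighborSet u)] [DecidablePred (G.Adj u)]
    {p : G.Walk u v} (hu : ∀ w, G.Adj u w → w ∈ p.support) :
    G.degree u ≤ #{i ∈ range p.length | G.Adj u (p.getVert (i + 1))} := by
  refine degree_le_card_of_forall_adj_exists (f := fun i => p.getVert (i + 1)) fun w hw => ?_
  obtain ⟨n, rfl, hn⟩ := Walk.mem_support_iff_exists_getVert.1 (hu w hw)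
  cases n with
  | zero => exact absurd hw (by simp)
  | succ i => exact ⟨i, mem_filter.2 ⟨mem_range.2 hn, hw⟩, rfl⟩

lemma degree_end_le_card_filter_adj [Fintype (G.neighborSet v)] [DecidablePred (G.Adj v)]
    {p : G.Walk u v} (hv : ∀ w, G.Adj v w → w ∈ p.support) :
    G.degree v ≤ #{j ∈ range p.length | G.Adj v (p.getVert j)} := by
  refine degree_le_card_of_forall_adj_exists (f := p.getVert) fun w hw => ?_
  obtain ⟨j, rfl, hj⟩ := Walk.mem_support_iff_exists_getVert.1 (hv w hw)
  obtain hj | rfl := hj.lt_or_eq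
  · exact ⟨j, mem_filter.2 ⟨mem_range.2 hj, hw⟩, rfl⟩
  · exact absurd hw (by simp)

lemma injOn_getVert_add {p : G.Walk u v} (hp : p.IsPath) {c : ℕ} {I : Set ℕ}
    (hI : ∀ i ∈ I, i + c ≤ p.length) : Set.InjOn (fun i => p.getVert (i + c)) I :=
  hp.getVert_injOn.comp (add_left_injective c).injOn hI

lemma hasBipartiteHole_of_not_isClosable_of_lt {s t : ℕ} {p : G.Walk u v} (hp : p.IsPath)
    (hclosable : ¬ IsClosable p) {I J : Finset ℕ} (hIJ : ∀ i ∈ I, ∀ j ∈ J, i < j)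
    (hI : ∀ i ∈ I, i < p.length ∧ G.Adj u (p.getVert (i + 1)))
    (hJ : ∀ j ∈ J, G.Adj v (p.getVert j)) (hs : s ≤ #I) (ht : t ≤ #J) :
    G.HasBipartiteHole s t := by
  have hJlt j (hj : j ∈ J) : j < p.length := lt_length_of_adj_getVert (hJ j hj)
  refine hasBipartiteHole_of_injOn (injOn_getVert_add hp (c := 0) fun i hi => (hI i hi).1.le)
    (injOn_getVert_add hp (c := 1) hJlt) hs ht
    (fun i hi j hj hij => ?_) fun i hi j hj hij => hclosable ?_
  · have heq : i + 0 = j + 1 := hp.getVert_injOn (hI i hi).1.le (hJlt j hj) hij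
    have := hIJ i hi j hj
    omega
  · exact isClosable_of_adj_of_lt (hIJ i hi j hj) (hI i hi).2 (hJ j hj) hij

lemma hasBipartiteHole_of_not_isClosable_of_le {s t : ℕ} {p : G.Walk u v} (hp : p.IsPath)
    (hclosable : ¬ IsClosable p) {I J : Finset ℕ} (hJI : ∀ i ∈ I, ∀ j ∈ J, j ≤ i)
    (hI : ∀ i ∈ I, i + 1 < p.length ∧ G.Adj u (p.getVert (i + 1)))
    (hJ : ∀ j ∈ J, G.Adj v (p.getVert j)) (hs : s ≤ #J) (ht : t ≤ #I) :
    G.HasBipartiteHole s t := by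
  have hJlt j (hj : j ∈ J) : j < p.length := lt_length_of_adj_getVert (hJ j hj)
  refine hasBipartiteHole_of_injOn (injOn_getVert_add hp (c := 1) hJlt)
    (injOn_getVert_add hp (c := 2) fun i hi => (hI i hi).1) hs ht
    (fun j hj i hi hji => ?_) fun j hj i hi hji => hclosable ?_
  · have heq : j + 1 = i + 2 := hp.getVert_injOn (hJlt j hj) (hI i hi).1 hji
    have := hJI i hi j hj
    omega
  · exact isClosable_of_adj_of_le (hJI i hi j hj) (hI i hi).1 (hI i hi).2 (hJ j hj) hji

theorem isClosable_of_not_hasBipartiteHole [Fintype (G.neighborSet u)]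
    [Fintype (G.neighborSet v)] {s t : ℕ} (hs : 0 < s) (ht : 0 < t)
    (hole : ¬ G.HasBipartiteHole s t) {p : G.Walk u v} (hp : p.IsPath)
    (hu : ∀ w, G.Adj u w → w ∈ p.support) (hv : ∀ w, G.Adj v w → w ∈ p.support)
    (hdu : s + t - 1 ≤ G.degree u) (hdv : s + t - 1 ≤ G.degree v) : IsClosable p := by
  classical
  contrapose! hole with hclosable
  let X : Finset ℕ := {i ∈ range p.length | G.Adj u (p.getVert (i + 1))}
  let Y : Finset ℕ := {j ∈ range p.length | G.Adj v (p.getVert j)}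
  have hX {i} (hi : i ∈ X) : i + 1 < p.length ∧ G.Adj u (p.getVert (i + 1)) := by
    obtain ⟨hi, hadj⟩ := mem_filter.1 hi
    refine ⟨(Nat.succ_le_of_lt (mem_range.1 hi)).lt_of_ne fun hend => hclosable ?_, hadj⟩
    rw [← Nat.succ_eq_add_one, hend, p.getVert_length] at hadj
    exact ⟨u, v, p, .rfl, hadj.symm⟩
  have hY {j} (hj : j ∈ Y) : G.Adj v (p.getVert j) := (mem_filter.1 hj).2
  obtain ⟨m, hXle, hXge⟩ := exists_le_card_filter_le_and_le_card_filter_ge hs ht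
    (hdu.trans (degree_start_le_card_filter_adj hu) : s + t - 1 ≤ #X)
  have hYcard : s + t - 1 ≤ #Y := hdv.trans (degree_end_le_card_filter_adj hv)
  have hYsplit := card_filter_add_card_filter_not (s := Y) (· ≤ m)
  obtain hYgt | hYle : t ≤ #{j ∈ Y | ¬ j ≤ m} ∨ s ≤ #{j ∈ Y | j ≤ m} := by omega
  · refine hasBipartiteHole_of_not_isClosable_of_lt hp hclosable ?_ ?_ ?_ hXle hYgt <;>
      simp only [mem_filter, not_le]
    · exact fun i hi j hj => hi.2.trans_lt hj.2
    · exact fun i hi => ⟨i.lt_succ_self.trans (hX hi.1).1, (hX hi.1).2⟩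
    · exact fun j hj => hY hj.1
  · refine hasBipartiteHole_of_not_isClosable_of_le hp hclosable ?_ ?_ ?_ hYle hXge <;>
      simp only [mem_filter]
    · exact fun i hi j hj => hj.2.trans hi.2
    · exact fun i hi => hX hi.1
    · exact fun j hj => hY hj.1

/-- `p` is a path, and no path of `G` is longer than `p`. -/
def IsLongestPath (p : G.Walk u v) : Prop :=
  p.IsPath ∧ ∀ (a b : V) (q : G.Walk a b), q.IsPath → q.length ≤ p.length

namespace IsLongestPath

variable {p : G.Walk u v}

lemma reverse (hp : IsLongestPath p) : IsLongestPath p.reverse :=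
  ⟨hp.1.reverse, fun a b q hq => by simpa using hp.2 a b q hq⟩

lemma mem_support_of_adj_start (hp : IsLongestPath p) {w : V} (hw : G.Adj u w) :
    w ∈ p.support := by
  by_contra hmem
  have hlen := hp.2 _ _ _ (hp.1.cons (h := hw.symm) hmem)
  rw [Walk.length_cons] at hlen
  omega

lemma mem_support_of_adj_end (hp : IsLongestPath p) {w : V} (hw : G.Adj v w) :
    w ∈ p.support := by
  simpa using hp.reverse.mem_support_of_adj_start hw

lemma mem_support_of_isClosable (hp : IsLongestPath p) (hclosable : IsClosable p)
    (hconn : G.Preconnected) (w : V) : w ∈ p.support := by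
  by_contra hw
  obtain ⟨r⟩ := hconn u w
  obtain ⟨⟨⟨x, y⟩, hxy⟩, -, hx, hy⟩ :=
    r.exists_boundary_dart {z | z ∈ p.support} p.start_mem_support hw
  obtain ⟨z, q, hqp⟩ := hclosable.exists_walk_from hx
  have hq : q.IsPath := .mk' (hqp.nodup_iff.2 hp.1.support_nodup)
  have hqlongest : IsLongestPath q :=
    ⟨hq, fun a b q' hq' => (hp.2 a b q' hq').trans_eq (length_eq_of_support_perm hqp).symm⟩
  exact hy (hqp.mem_iff.1 (hqlongest.mem_support_of_adj_start hxy))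

end IsLongestPath

lemma IsClosable.isHamiltonian [Fintype V] [DecidableEq V] {p : G.Walk u v}
    (hclosable : IsClosable p) (hp : p.IsHamiltonian) (hn : 3 ≤ Fintype.card V) :
    G.IsHamiltonian := by
  obtain ⟨a, b, q, hqp, hba⟩ := hclosable
  have hq : q.IsHamiltonian := fun w => (hqp.count_eq w).trans (hp w)
  have hlen := hq.length_eq
  refine fun _ => ⟨b, .cons hba q, ?_⟩
  rw [Walk.isHamiltonianCycle_iff_isCycle_and_length_eq,
    Walk.isCycle_iff_isPath_tail_and_le_length, Walk.length_cons]
  exact ⟨⟨by simpa using hq.isPath, by omega⟩, by omega⟩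

end Walks

theorem isHamiltonian_of_not_hasBipartiteHole {V : Type*} [Fintype V] [DecidableEq V]
    {G : SimpleGraph V} [DecidableRel G.Adj] (hn : 3 ≤ Fintype.card V) {s t : ℕ}
    (hs : 0 < s) (ht : 0 < t) (hole : ¬ G.HasBipartiteHole s t)
    (hdeg : s + t - 1 ≤ G.minDegree) : G.IsHamiltonian := by
  have hdegree (w : V) : s + t - 1 ≤ G.degree w := hdeg.trans (G.minDegree_le_degree w)
  have hconn : G.Preconnected := fun u v => reachable_of_not_hasBipartiteHole hole
    (le_trans (by omega) (hdegree u)) (le_trans (by omega) (hdegree v))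
  have : Nonempty V := Fintype.card_pos_iff.1 (by omega)
  obtain ⟨u, v, p, hpath, hmax⟩ := Walk.exists_isPath_forall_isPath_length_le_length G
  have hp : IsLongestPath p := ⟨hpath, hmax⟩
  have hclosable : IsClosable p := isClosable_of_not_hasBipartiteHole hs ht hole hpath
    (fun _ => hp.mem_support_of_adj_start) (fun _ => hp.mem_support_of_adj_end)
    (hdegree u) (hdegree v)
  exact hclosable.isHamiltonian
    (hpath.isHamiltonian_of_mem (hp.mem_support_of_isClosable hclosable hconn)) hn

theorem hamiltonian_of_minDegree_ge_biHoleNumber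
    {V : Type*} [Fintype V] [DecidableEq V] (G : SimpleGraph V) [DecidableRel G.Adj]
    (hn : 3 ≤ Fintype.card V) (h : G.biHoleNumber ≤ G.minDegree) :
    G.IsHamiltonian := by
  obtain ⟨s, t, hs, ht, hst, hole⟩ := exists_biHoleNumber_eq_and_not_hasBipartiteHole G
  exact isHamiltonian_of_not_hasBipartiteHole hn hs ht hole (hst ▸ h)
end

section
/- Let r ≥ 0 be an integer and let G be a finite simple graph with at least 3 vertices such that δ(G) ≥ (r + 1)·α̃(G) + 3r. Then G contains r + 1 Hamilton cycles that are pairwise edge-disjoint (their edge sets are pairwise disjoint). -/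
/-!
Suppose `G` has no `(s, t)`-bipartite-hole. List the vertices of `G` with as few gaps (consecutive
non-adjacent vertices) as possible. If both ends of a listing have degree at least `s + t - 1`, then
it can be rearranged, without creating gaps, so that its ends become adjacent: otherwise, the
entries next to the neighbours of the two ends contain an `(s, t)`-bipartite-hole. A listing with
adjacent ends that still had a gap could be cut open there, which would save that gap. So
`s + t - 1 ≤ δ(G)` yields a Hamilton cycle (McDiarmid and Yolov).

Deleting a Hamilton cycle lowers all degrees by two and creates no `(s, t + 2 * s)`-bipartite-hole,
so induction on `r` gives `r + 1` edge-disjoint Hamilton cycles as soon as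
`s + t - 1 + 2 * r * (s + 1) ≤ δ(G)`. If `s + t - 1` is the bipartite-hole-number and `s ≤ t`, the
left-hand side is at most `(r + 1) * (s + t - 1) + 3 * r`.
-/

namespace BipartiteHole

open Finset SimpleGraph

variable {V : Type*} {G : SimpleGraph V}

/-! ### Bipartite holes -/

theorem hasBipartiteHole_of_le_card {s t : ℕ} {S T : Finset V} (hST : Disjoint S T) (hs : s ≤ #S)
    (ht : t ≤ #T) (hadj : ∀ a ∈ S, ∀ b ∈ T, ¬ G.Adj a b) : G.HasBipartiteHole s t := by
  obtain ⟨S', hS', rfl⟩ := exists_subset_card_eq hs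
  obtain ⟨T', hT', rfl⟩ := exists_subset_card_eq ht
  exact ⟨S', T', hST.mono hS' hT', rfl, rfl, fun a ha b hb => hadj a (hS' ha) b (hT' hb)⟩

theorem hasBipartiteHole_of_injOn {ι κ : Type*} {s t : ℕ} {X : Finset ι} {Y : Finset κ}
    {f : ι → V} {g : κ → V} (hf : Set.InjOn f X) (hg : Set.InjOn g Y) (hs : s ≤ #X) (ht : t ≤ #Y)
    (h : ∀ i ∈ X, ∀ j ∈ Y, f i ≠ g j ∧ ¬ G.Adj (f i) (g j)) : G.HasBipartiteHole s t := by
  classical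
  refine hasBipartiteHole_of_le_card (S := X.image f) (T := Y.image g) ?_
    (by rwa [card_image_of_injOn hf]) (by rwa [card_image_of_injOn hg]) ?_
  · simp only [Finset.disjoint_left, mem_image]
    rintro _ ⟨i, hi, rfl⟩ ⟨j, hj, hij⟩
    exact (h i hi j hj).1 hij.symm
  · simp only [forall_mem_image]
    exact fun i hi j hj => (h i hi j hj).2

theorem hasBipartiteHole_symm {s t : ℕ} (h : G.HasBipartiteHole s t) :
    G.HasBipartiteHole t s := by
  obtain ⟨S, T, hST, hs, ht, hadj⟩ := h
  exact ⟨T, S, hST.symm, ht, hs, fun a ha b hb hab => hadj b hb a ha hab.symm⟩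

theorem exists_biHoleNumber_eq [Finite V] (G : SimpleGraph V) :
    ∃ s t : ℕ, 0 < s ∧ s ≤ t ∧ G.biHoleNumber = s + t - 1 ∧ ¬ G.HasBipartiteHole s t := by
  have := Fintype.ofFinite V
  have hne : {r : ℕ | ∃ s t : ℕ, 0 < s ∧ 0 < t ∧ r = s + t - 1 ∧
      ¬ G.HasBipartiteHole s t}.Nonempty := by
    refine ⟨_, Fintype.card V + 1, 1, by omega, one_pos, rfl, ?_⟩
    rintro ⟨S, -, -, hS, -⟩
    have := S.card_le_univ
    omega
  obtain ⟨s, t, hs, ht, hr, hole⟩ := Nat.sInf_mem hne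
  rcases le_total s t with hst | hts
  · exact ⟨s, t, hs, hst, hr, hole⟩
  · exact ⟨t, s, ht, hts, by rwa [add_comm], fun h => hole (hasBipartiteHole_symm h)⟩

theorem hasBipartiteHole_of_sdiff [Fintype V] {F : SimpleGraph V} [DecidableRel F.Adj] {s t : ℕ}
    (h : (G \ F).HasBipartiteHole s (t + F.maxDegree * s)) : G.HasBipartiteHole s t := by
  classical
  obtain ⟨S, T, hST, rfl, ht, hadj⟩ := h
  set N := S.biUnion fun v => F.neighborFinset v
  have hN : #N ≤ #S * F.maxDegree := card_biUnion_le_card_mul _ _ _ fun v _ =>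
    (F.card_neighborFinset_eq_degree v).trans_le (F.degree_le_maxDegree v)
  refine hasBipartiteHole_of_le_card (T := T \ N) (hST.mono_right sdiff_subset) le_rfl ?_ ?_
  · have := le_card_sdiff N T
    rw [mul_comm] at hN
    omega
  · intro a ha b hb hab
    have hbN : ¬ F.Adj a b := fun hF =>
      (mem_sdiff.1 hb).2 (mem_biUnion.2 ⟨a, ha, (F.mem_neighborFinset a b).2 hF⟩)
    exact hadj a ha b (mem_sdiff.1 hb).1 ((sdiff_adj _ _ _ _).2 ⟨hab, hbN⟩)

theorem minDegree_le_minDegree_sdiff_add_maxDegree [Fintype V] (G F : SimpleGraph V)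
    [DecidableRel G.Adj] [DecidableRel F.Adj] [DecidableRel (G \ F).Adj] :
    G.minDegree ≤ (G \ F).minDegree + F.maxDegree := by
  classical
  rcases isEmpty_or_nonempty V with hV | hV
  · simp
  obtain ⟨v, hv⟩ := (G \ F).exists_minimal_degree_vertex
  calc G.minDegree ≤ G.degree v := G.minDegree_le_degree v
    _ ≤ (G \ F).degree v + F.degree v := by
      have hsub : G.neighborFinset v ⊆ (G \ F).neighborFinset v ∪ F.neighborFinset v := by
        intro w
        simp only [mem_union, mem_neighborFinset, sdiff_adj]
        tauto
      simpa only [card_neighborFinset_eq_degree] using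
        (card_le_card hsub).trans (card_union_le _ _)
    _ ≤ (G \ F).minDegree + F.maxDegree := by
      rw [hv]
      exact Nat.add_le_add_left (F.degree_le_maxDegree v) _

/-! ### Hamilton cycles from vertex listings -/

/-- The first and the last entry of a list of vertices are adjacent, so that the list closes up to a
cyclic sequence. By convention, this holds for the empty list. -/
def EndsAdj (G : SimpleGraph V) (l : List V) : Prop :=
  ∀ x ∈ l.getLast?, ∀ y ∈ l.head?, G.Adj x y

theorem exists_isHamiltonianCycle_of_isChain [Fintype V] [DecidableEq V]
    (hV : 3 ≤ Fintype.card V) {l : List V} (hnodup : l.Nodup) (hmem : ∀ v, v ∈ l)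
    (hchain : l.IsChain G.Adj) (hends : EndsAdj G l) :
    ∃ a, ∃ p : G.Walk a a, p.IsHamiltonianCycle := by
  obtain ⟨v⟩ : Nonempty V := Fintype.card_pos_iff.1 (by omega)
  have hne : l ≠ [] := List.ne_nil_of_mem (hmem v)
  have hadj : G.Adj (l.getLast hne) (l.head hne) :=
    hends _ (List.getLast_mem_getLast? hne) _ (List.head_mem_head? hne)
  set p := Walk.ofSupport l hne hchain
  have hp : p.IsHamiltonian := fun a => by
    rw [Walk.support_ofSupport]
    exact List.count_eq_one_of_mem hnodup (hmem a)
  refine ⟨_, .cons hadj p, ?_, fun a => by simpa [Walk.support_tail_of_not_nil] using hp a⟩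
  rw [Walk.isCycle_iff_isPath_tail_and_le_length, Walk.length_cons, hp.length_eq]
  exact ⟨by simpa using hp.isPath, by omega⟩

/-! ### Gaps in vertex listings -/

section Gaps

variable [DecidableRel G.Adj]

variable (G) in
/-- The number of pairs of consecutive entries of a list of vertices that are not adjacent. -/
def gaps : List V → ℕ
  | [] => 0
  | [_] => 0
  | a :: b :: l => (if G.Adj a b then 0 else 1) + gaps (b :: l)

theorem gaps_eq_zero_iff {l : List V} : gaps G l = 0 ↔ l.IsChain G.Adj := by
  fun_induction gaps <;> simp_all

theorem gaps_append_cons (A B : List V) (x : V) :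
    gaps G (A ++ x :: B) = gaps G (A ++ [x]) + gaps G (x :: B) := by
  fun_induction gaps G A with
  | case1 => simp [gaps]
  | case2 a => simp [gaps]
  | case3 a b A ih => simp_all [gaps, add_assoc]

theorem gaps_append {A B : List V} {x y : V} (hx : x ∈ A.getLast?) (hy : y ∈ B.head?) :
    gaps G (A ++ B) = gaps G A + (if G.Adj x y then 0 else 1) + gaps G B := by
  obtain ⟨A, rfl⟩ := List.getLast?_eq_some_iff.1 hx
  obtain ⟨B, rfl⟩ := List.head?_eq_some_iff.1 hy
  rw [gaps_append_cons, List.append_assoc, List.singleton_append, gaps_append_cons]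
  simp [gaps]

theorem gaps_add_gaps_le_gaps_append (A B : List V) :
    gaps G A + gaps G B ≤ gaps G (A ++ B) := by
  rcases A.eq_nil_or_concat with rfl | ⟨A, x, rfl⟩
  · simp [gaps]
  rcases B with _ | ⟨y, B⟩
  · simp [gaps]
  rw [gaps_append (x := x) (y := y) (by simp) (by simp)]
  omega

theorem gaps_append_of_adj {A B : List V} (h : ∀ x ∈ A.getLast?, ∀ y ∈ B.head?, G.Adj x y) :
    gaps G (A ++ B) = gaps G A + gaps G B := by
  rcases A.eq_nil_or_concat with rfl | ⟨A, x, rfl⟩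
  · simp [gaps]
  rcases B with _ | ⟨y, B⟩
  · simp [gaps]
  rw [gaps_append (x := x) (y := y) (by simp) (by simp), if_pos (h x (by simp) y (by simp)),
    add_zero]

theorem gaps_reverse (l : List V) : gaps G l.reverse = gaps G l := by
  fun_induction gaps G l with
  | case1 => rfl
  | case2 a => rfl
  | case3 a b l ih =>
    rw [List.reverse_cons, List.reverse_cons, List.append_assoc, List.singleton_append,
      gaps_append_cons, ← List.reverse_cons, ih]
    simp [gaps, G.adj_comm, add_comm]

theorem exists_append_gaps_lt {l : List V} (h : gaps G l ≠ 0) :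
    ∃ A B, l = A ++ B ∧ gaps G A + gaps G B < gaps G l := by
  fun_induction gaps G l with
  | case1 => exact absurd rfl h
  | case2 a => exact absurd rfl h
  | case3 a b l ih =>
    by_cases hab : G.Adj a b
    · obtain ⟨A, B, hl, hlt⟩ := ih (by simpa [hab] using h)
      rcases A with _ | ⟨b', A⟩
      · rw [List.nil_append] at hl
        simp [gaps, hl] at hlt
      · obtain ⟨rfl, rfl⟩ := List.cons_eq_cons.1 hl
        exact ⟨a :: b :: A, B, rfl, by simpa [gaps, hab] using hlt⟩
    · exact ⟨[a], b :: l, rfl, by simp [gaps, hab]⟩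

variable (G) in
/-- A list of vertices can be rearranged, without creating gaps, so that its ends are adjacent. -/
def Closable (l : List V) : Prop :=
  ∃ l', l'.Perm l ∧ gaps G l' ≤ gaps G l ∧ EndsAdj G l'

theorem exists_isChain_of_forall_closable {l : List V} (h : ∀ l', l'.Perm l → Closable G l') :
    ∃ l', l'.Perm l ∧ l'.IsChain G.Adj ∧ EndsAdj G l' := by
  obtain ⟨m, hml, hmin⟩ := exists_minimalFor_of_wellFoundedLT (·.Perm l) (gaps G) ⟨l, .refl l⟩
  obtain ⟨l', hl'm, hle, hends⟩ := h m hml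
  refine ⟨l', hl'm.trans hml, ?_, hends⟩
  by_contra hchain
  obtain ⟨A, B, rfl, hlt⟩ := exists_append_gaps_lt (mt gaps_eq_zero_iff.1 hchain)
  have hBA : gaps G (B ++ A) = gaps G B + gaps G A := gaps_append_of_adj fun x hx y hy =>
    hends x (by simp_all) y (by simp_all)
  have := hmin (List.perm_append_comm.trans (hl'm.trans hml)) (by omega)
  omega

/-! ### Exchanging segments of a listing -/

theorem closable_append_of_reverse_left {A B : List V} (hA : A ≠ []) (hB : B ≠ [])
    (hhead : ∀ x ∈ A.head?, ∀ y ∈ B.head?, G.Adj x y)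
    (hlast : ∀ x ∈ A.getLast?, ∀ y ∈ B.getLast?, G.Adj x y) : Closable G (A ++ B) := by
  refine ⟨A.reverse ++ B, A.reverse_perm.append_right B, ?_, ?_⟩
  · rw [gaps_append_of_adj (by simpa using hhead), gaps_reverse]
    exact gaps_add_gaps_le_gaps_append A B
  · have := fun x hx y hy => (hlast y hy x hx).symm
    simpa [EndsAdj, List.getLast?_append_of_ne_nil, List.head?_append, hA, hB] using this

theorem closable_append_append_of_reverse_outer {A B C : List V} (hA : A ≠ []) (hB : B ≠ [])
    (hC : C ≠ []) (hAB : ∀ x ∈ A.head?, ∀ y ∈ B.head?, G.Adj x y)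
    (hBC : ∀ x ∈ B.getLast?, ∀ y ∈ C.getLast?, G.Adj x y)
    (hCA : ∀ x ∈ C.head?, ∀ y ∈ A.getLast?, G.Adj x y) : Closable G (A ++ B ++ C) := by
  refine ⟨A.reverse ++ B ++ C.reverse,
    (A.reverse_perm.append_right B).append C.reverse_perm, ?_, ?_⟩
  · rw [gaps_append_of_adj (by simpa [List.getLast?_append_of_ne_nil _ hB] using hBC),
      gaps_append_of_adj (by simpa using hAB), gaps_reverse, gaps_reverse]
    exact (Nat.add_le_add_right (gaps_add_gaps_le_gaps_append A B) _).trans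
      (gaps_add_gaps_le_gaps_append _ C)
  · simpa [EndsAdj, List.getLast?_append, List.head?_append, hA, hC] using hCA

theorem closable_append_append_of_swap {A B C : List V} (hA : A ≠ []) (hB : B ≠ [])
    (hC : C ≠ []) (hAC : ∀ x ∈ A.getLast?, ∀ y ∈ C.getLast?, G.Adj x y)
    (hCB : ∀ x ∈ C.head?, ∀ y ∈ B.head?, G.Adj x y)
    (hBA : ∀ x ∈ B.getLast?, ∀ y ∈ A.head?, G.Adj x y) : Closable G (A ++ B ++ C) := by
  refine ⟨A ++ C.reverse ++ B, ?_, ?_, ?_⟩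
  · rw [List.append_assoc, List.append_assoc]
    exact ((C.reverse_perm.append_right B).trans List.perm_append_comm).append_left A
  · rw [gaps_append_of_adj (by simpa [List.getLast?_append_of_ne_nil, hC] using hCB),
      gaps_append_of_adj (by simpa using hAC), gaps_reverse, add_right_comm]
    exact (Nat.add_le_add_right (gaps_add_gaps_le_gaps_append A B) _).trans
      (gaps_add_gaps_le_gaps_append _ C)
  · simpa [EndsAdj, List.getLast?_append_of_ne_nil, List.head?_append, hA, hB] using hBA

variable {f : ℕ → V} {n : ℕ}

theorem head?_Ico {i j : ℕ} (h : i < j) : (List.Ico i j).head? = some i := by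
  rw [List.Ico.eq_cons h, List.head?_cons]

theorem getLast?_Ico {i j : ℕ} (h : i ≤ j) : (List.Ico i (j + 1)).getLast? = some j := by
  rw [List.Ico.succ_top h, List.getLast?_concat]

theorem not_adj_ends_of_not_closable (hf : ¬ Closable G ((List.range (n + 1)).map f)) :
    ¬ G.Adj (f n) (f 0) := fun h => hf ⟨_, .refl _, le_rfl, by
  simpa (disch := omega) [EndsAdj, ← List.Ico.zero_bot, head?_Ico, getLast?_Ico] using h⟩

theorem not_adj_of_le_of_not_closable (hf : ¬ Closable G ((List.range (n + 1)).map f)) {i k : ℕ}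
    (hik : i ≤ k) (hk : k < n) (hfirst : G.Adj (f 0) (f (i + 1))) (hlast : G.Adj (f n) (f k)) :
    ¬ G.Adj (f i) (f (k + 1)) := by
  contrapose! hf
  rw [← List.Ico.zero_bot, ← List.Ico.append_consecutive (k + 1).zero_le (by omega : _ ≤ n + 1)]
  rcases hik.eq_or_lt with rfl | hik
  · rw [List.map_append]
    apply closable_append_of_reverse_left <;>
      simp (disch := omega) [head?_Ico, getLast?_Ico, hk, hfirst, hlast.symm]
  · rw [← List.Ico.append_consecutive (i + 1).zero_le (by omega : _ ≤ k + 1), List.map_append,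
      List.map_append]
    apply closable_append_append_of_reverse_outer <;>
      simp (disch := omega) [head?_Ico, getLast?_Ico, hik, hk, hfirst, hlast.symm, hf.symm]

theorem not_adj_of_ge_of_not_closable (hf : ¬ Closable G ((List.range (n + 1)).map f)) {i k : ℕ}
    (hki : k ≤ i) (hi : i + 1 < n) (hfirst : G.Adj (f 0) (f (i + 1))) (hlast : G.Adj (f n) (f k)) :
    ¬ G.Adj (f (k + 1)) (f (i + 2)) := by
  contrapose! hf
  rw [← List.Ico.zero_bot, ← List.Ico.append_consecutive (i + 2).zero_le (by omega : _ ≤ n + 1),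
    ← List.Ico.append_consecutive (k + 1).zero_le (by omega : _ ≤ i + 2), List.map_append,
    List.map_append]
  apply closable_append_append_of_swap <;>
    simp (disch := omega) [head?_Ico, getLast?_Ico, hki, hi, hfirst.symm, hlast.symm, hf.symm]

/-! ### The theorem of McDiarmid and Yolov -/

theorem exists_card_filter_lt_lt_le_card_filter_le {α : Type*} [LinearOrder α] {X : Finset α}
    {s : ℕ} (hs : 0 < s) (hX : s ≤ #X) :
    ∃ q, #{x ∈ X | x < q} < s ∧ s ≤ #{x ∈ X | x ≤ q} := by
  set e := X.orderEmbOfFin rfl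
  have card_eq (p : α → Prop) [DecidablePred p] : #{x ∈ X | p x} = #{i | p (e i)} := by
    conv_lhs => rw [← X.map_orderEmbOfFin_univ rfl, filter_map, card_map]
    rfl
  refine ⟨e ⟨s - 1, by omega⟩, ?_, ?_⟩
  · simp only [card_eq, e.lt_iff_lt, filter_gt_eq_Iio, Fin.card_Iio]
    omega
  · simp only [card_eq, e.le_iff_le, filter_ge_eq_Iic, Fin.card_Iic]
    omega

theorem exists_threshold {α : Type*} [LinearOrder α] {X Y : Finset α} {s t : ℕ} (hs : 0 < s)
    (ht : 0 < t) (hX : s + t ≤ #X + 1) (hY : s + t ≤ #Y + 1) :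
    ∃ q, (s ≤ #{x ∈ X | x ≤ q} ∧ t ≤ #{y ∈ Y | q ≤ y}) ∨
      (s ≤ #{y ∈ Y | y < q} ∧ t ≤ #{x ∈ X | q ≤ x}) := by
  obtain ⟨q, hlt, hle⟩ := exists_card_filter_lt_lt_le_card_filter_le hs (by omega : s ≤ #X)
  have hXq := card_filter_add_card_filter_not (s := X) (· < q)
  have hYq := card_filter_add_card_filter_not (s := Y) (· < q)
  simp only [not_lt] at hXq hYq
  refine ⟨q, ?_⟩
  omega

theorem degree_le_card_filter_adj_succ [Fintype V] (hf : Set.SurjOn f (Set.Iic n) Set.univ) :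
    G.degree (f 0) ≤ #{i ∈ range n | G.Adj (f 0) (f (i + 1))} := by
  refine card_le_card_of_surjOn (fun i => f (i + 1)) fun w hw => ?_
  obtain ⟨_ | i, hi, rfl⟩ := hf (Set.mem_univ w)
  · simp at hw
  · exact ⟨i, mem_coe.2 (mem_filter.2 ⟨mem_range.2 hi, by simpa using hw⟩), rfl⟩

theorem degree_le_card_filter_adj [Fintype V] (hf : Set.SurjOn f (Set.Iic n) Set.univ) :
    G.degree (f n) ≤ #{k ∈ range n | G.Adj (f n) (f k)} := by
  refine card_le_card_of_surjOn f fun w hw => ?_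
  obtain ⟨k, hk, rfl⟩ := hf (Set.mem_univ w)
  obtain rfl | hk := (Set.mem_Iic.1 hk).eq_or_lt
  · simp at hw
  · exact ⟨k, mem_coe.2 (mem_filter.2 ⟨mem_range.2 hk, by simpa using hw⟩), rfl⟩

theorem closable_of_not_hasBipartiteHole [Fintype V] {s t : ℕ} (hs : 0 < s) (ht : 0 < t)
    (hole : ¬ G.HasBipartiteHole s t) (hf : Set.BijOn f (Set.Iic n) Set.univ)
    (hfirst : s + t ≤ G.degree (f 0) + 1) (hlast : s + t ≤ G.degree (f n) + 1) :
    Closable G ((List.range (n + 1)).map f) := by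
  by_contra hclos
  set X : Finset ℕ := {i ∈ range n | G.Adj (f 0) (f (i + 1))}
  set Y : Finset ℕ := {k ∈ range n | G.Adj (f n) (f k)}
  have mem_X {i : ℕ} (hi : i ∈ X) : i + 1 < n ∧ G.Adj (f 0) (f (i + 1)) := by
    obtain ⟨hin, hadj⟩ := mem_filter.1 hi
    refine ⟨lt_of_le_of_ne (mem_range.1 hin) ?_, hadj⟩
    rintro rfl
    exact not_adj_ends_of_not_closable hclos hadj.symm
  have mem_Y {k : ℕ} (hk : k ∈ Y) : k < n ∧ G.Adj (f n) (f k) := by simpa [Y] using hk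
  have injOn_shift (m : ℕ) {Z : Finset ℕ} (hZ : ∀ i ∈ Z, i + m ≤ n) :
      Set.InjOn (fun i => f (i + m)) Z := fun i hi j hj hij =>
    Nat.add_right_cancel (hf.injOn (hZ i hi) (hZ j hj) hij)
  have ne_of_lt {i j : ℕ} (hij : i < j) (hj : j ≤ n) : f i ≠ f j := fun h =>
    hij.ne (hf.injOn (hij.le.trans hj) hj h)
  obtain ⟨q, ⟨hsX, htY⟩ | ⟨hsY, htX⟩⟩ := exists_threshold (X := X) (Y := Y) hs ht
    (hfirst.trans (Nat.add_le_add_right (degree_le_card_filter_adj_succ hf.surjOn) 1))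
    (hlast.trans (Nat.add_le_add_right (degree_le_card_filter_adj hf.surjOn) 1))
  · refine hole (hasBipartiteHole_of_injOn (injOn_shift 0 ?_) (injOn_shift 1 ?_) hsX htY ?_) <;>
      simp only [mem_filter, and_imp]
    · exact fun i hi _ => Nat.le_of_succ_le (mem_X hi).1.le
    · exact fun k hk _ => (mem_Y hk).1
    · intro i hi hiq k hk hqk
      obtain ⟨⟨-, hi⟩, hkn, hk⟩ := And.intro (mem_X hi) (mem_Y hk)
      exact ⟨ne_of_lt (by omega) hkn,
        not_adj_of_le_of_not_closable hclos (hiq.trans hqk) hkn hi hk⟩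
  · refine hole (hasBipartiteHole_of_injOn (injOn_shift 1 ?_) (injOn_shift 2 ?_) hsY htX ?_) <;>
      simp only [mem_filter, and_imp]
    · exact fun k hk _ => (mem_Y hk).1
    · exact fun i hi _ => (mem_X hi).1
    · intro k hk hkq i hi hqi
      obtain ⟨⟨hin, hi⟩, -, hk⟩ := And.intro (mem_X hi) (mem_Y hk)
      exact ⟨ne_of_lt (by omega) hin,
        not_adj_of_ge_of_not_closable hclos (hkq.le.trans hqi) hin hi hk⟩

theorem exists_bijOn_Iic_eq_map_range [Nonempty V] {l : List V} (hl : l.Nodup)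
    (hmem : ∀ v, v ∈ l) : ∃ (n : ℕ) (f : ℕ → V), Set.BijOn f (Set.Iic n) Set.univ ∧
      l = (List.range (n + 1)).map f := by
  obtain ⟨v⟩ := ‹Nonempty V›
  obtain ⟨n, hn⟩ : ∃ n, l.length = n + 1 :=
    Nat.exists_eq_add_one.2 (List.length_pos_of_mem (hmem v))
  have getD_eq : ∀ i (hi : i < l.length), l.getD i v = l[i] := fun i hi => by simp [hi]
  refine ⟨n, fun i => l.getD i v, ⟨Set.mapsTo_univ _ _, ?_, fun w _ => ?_⟩, ?_⟩
  · intro i hi j hj hij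
    rw [Set.mem_Iic] at hi hj
    simp only [getD_eq i (by omega), getD_eq j (by omega)] at hij
    exact (hl.getElem_inj_iff).1 hij
  · obtain ⟨i, hi, rfl⟩ := List.getElem_of_mem (hmem w)
    exact ⟨i, Set.mem_Iic.2 (by omega), getD_eq i hi⟩
  · exact List.ext_getElem (by simp [hn]) (by simp_all)

theorem exists_isHamiltonianCycle_of_not_hasBipartiteHole [Fintype V] [DecidableEq V]
    (hV : 3 ≤ Fintype.card V) {s t : ℕ} (hs : 0 < s) (ht : 0 < t)
    (hole : ¬ G.HasBipartiteHole s t) (hdeg : s + t ≤ G.minDegree + 1) :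
    ∃ a, ∃ p : G.Walk a a, p.IsHamiltonianCycle := by
  have : Nonempty V := Fintype.card_pos_iff.1 (by omega)
  have hle (v : V) : s + t ≤ G.degree v + 1 :=
    hdeg.trans (Nat.add_le_add_right (G.minDegree_le_degree v) 1)
  have hclos : ∀ l : List V, l.Perm univ.toList → Closable G l := by
    intro l hl
    obtain ⟨n, f, hf, rfl⟩ := exists_bijOn_Iic_eq_map_range
      (hl.nodup_iff.2 univ.nodup_toList) (by simp [hl.mem_iff])
    exact closable_of_not_hasBipartiteHole hs ht hole hf (hle _) (hle _)
  obtain ⟨l, hl, hchain, hends⟩ := exists_isChain_of_forall_closable hclos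
  exact exists_isHamiltonianCycle_of_isChain hV (hl.nodup_iff.2 univ.nodup_toList)
    (by simp [hl.mem_iff]) hchain hends

end Gaps

/-! ### Edge-disjoint Hamilton cycles -/

theorem maxDegree_spanningCoe_toSubgraph_le_two [Fintype V] {a : V} {p : G.Walk a a}
    (hp : p.IsCycle) [DecidableRel p.toSubgraph.spanningCoe.Adj] :
    p.toSubgraph.spanningCoe.maxDegree ≤ 2 := by
  refine maxDegree_le_of_forall_degree_le _ _ fun v => ?_
  rw [← card_neighborFinset_eq_degree, ← Set.ncard_coe_finset, coe_neighborFinset]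
  change (p.toSubgraph.neighborSet v).ncard ≤ 2
  by_cases hv : v ∈ p.support
  · exact (hp.ncard_neighborSet_toSubgraph_eq_two hv).le
  · have hempty : p.toSubgraph.neighborSet v = ∅ := Set.eq_empty_of_forall_notMem fun w hw =>
      hv (p.mem_verts_toSubgraph.1 (p.toSubgraph.edge_vert hw))
    simp [hempty]

/-- `G` has `k` Hamilton cycles with pairwise disjoint edge sets. -/
def HasEdgeDisjointHamiltonianCycles [DecidableEq V] (G : SimpleGraph V) (k : ℕ) : Prop :=
  ∃ c : Fin k → Σ a : V, G.Walk a a, (∀ i, (c i).2.IsHamiltonianCycle) ∧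
    ∀ i j, i ≠ j → ∀ e ∈ (c i).2.edges, e ∉ (c j).2.edges

theorem hasEdgeDisjointHamiltonianCycles_zero [DecidableEq V] (G : SimpleGraph V) :
    HasEdgeDisjointHamiltonianCycles G 0 :=
  ⟨Fin.elim0, Fin.rec0, Fin.rec0⟩

theorem hasEdgeDisjointHamiltonianCycles_succ [DecidableEq V] {a : V} {p : G.Walk a a}
    (hp : p.IsHamiltonianCycle) {k : ℕ}
    (h : HasEdgeDisjointHamiltonianCycles (G \ p.toSubgraph.spanningCoe) k) :
    HasEdgeDisjointHamiltonianCycles G (k + 1) := by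
  obtain ⟨c, hc, hdisj⟩ := h
  have hle : G \ p.toSubgraph.spanningCoe ≤ G := sdiff_le
  let c' (i : Fin k) : Σ b : V, G.Walk b b := ⟨_, (c i).2.mapLe hle⟩
  have hc' (i) : (c' i).2.IsHamiltonianCycle := (hc i).map (f := .ofLE hle) Function.bijective_id
  have edges_c' (i) : (c' i).2.edges = (c i).2.edges := Walk.edges_mapLe_eq_edges hle _
  have hdisj' (i j) (hij : i ≠ j) : ∀ e ∈ (c' i).2.edges, e ∉ (c' j).2.edges := by
    simpa only [edges_c'] using hdisj i j hij
  have hpc' (i) : ∀ e ∈ (c' i).2.edges, e ∉ p.edges := by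
    intro e he
    rw [edges_c'] at he
    have := (c i).2.edges_subset_edgeSet he
    rw [edgeSet_sdiff, Subgraph.edgeSet_spanningCoe] at this
    exact mt (Walk.mem_edges_toSubgraph p).2 this.2
  refine ⟨Fin.cons ⟨a, p⟩ c', Fin.cases hp hc', Fin.cases (Fin.cases ?_ ?_) fun i =>
    Fin.cases ?_ ?_⟩
  · exact fun h => (h rfl).elim
  · exact fun j _ e hep he => hpc' j e he hep
  · exact fun _ => hpc' i
  · exact fun j hij => hdisj' i j (ne_of_apply_ne Fin.succ hij)

theorem hasEdgeDisjointHamiltonianCycles_of_not_hasBipartiteHole [Fintype V] [DecidableEq V]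
    (G : SimpleGraph V) [DecidableRel G.Adj] (hV : 3 ≤ Fintype.card V) (r : ℕ) {s t : ℕ}
    (hs : 0 < s) (ht : 0 < t) (hole : ¬ G.HasBipartiteHole s t)
    (hdeg : s + t + 2 * r * (s + 1) ≤ G.minDegree + 1) :
    HasEdgeDisjointHamiltonianCycles G (r + 1) := by
  classical
  induction r generalizing G t with
  | zero =>
    obtain ⟨a, p, hp⟩ := exists_isHamiltonianCycle_of_not_hasBipartiteHole hV hs ht hole (by omega)
    exact hasEdgeDisjointHamiltonianCycles_succ hp (hasEdgeDisjointHamiltonianCycles_zero _)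
  | succ r ih =>
    obtain ⟨a, p, hp⟩ := exists_isHamiltonianCycle_of_not_hasBipartiteHole hV hs ht hole (by omega)
    set C := p.toSubgraph.spanningCoe
    have hC : C.maxDegree ≤ 2 := maxDegree_spanningCoe_toSubgraph_le_two hp.isCycle
    have hδ := minDegree_le_minDegree_sdiff_add_maxDegree G C
    have hCs : C.maxDegree * s ≤ 2 * s := Nat.mul_le_mul_right s hC
    exact hasEdgeDisjointHamiltonianCycles_succ hp <| ih (G \ C) (ht.trans_le le_self_add)
      (mt hasBipartiteHole_of_sdiff hole) (by linarith)

end BipartiteHole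

theorem edge_disjoint_hamilton_cycles_of_minDegree
    {V : Type*} [Fintype V] [DecidableEq V] (G : SimpleGraph V) [DecidableRel G.Adj]
    (r : ℕ) (hn : 3 ≤ Fintype.card V)
    (h : (r + 1) * G.biHoleNumber + 3 * r ≤ G.minDegree) :
    ∃ c : Fin (r + 1) → Σ a : V, G.Walk a a,
      (∀ i, (c i).2.IsHamiltonianCycle) ∧
      ∀ i j, i ≠ j → ∀ e ∈ (c i).2.edges, e ∉ (c j).2.edges := by
  obtain ⟨s, t, hs, hst, hα, hole⟩ := BipartiteHole.exists_biHoleNumber_eq G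
  have hst_eq : s + t = G.biHoleNumber + 1 := by omega
  have hs_le : 2 * (s + 1) ≤ G.biHoleNumber + 3 := by omega
  have hdeg : s + t + 2 * r * (s + 1) ≤ G.minDegree + 1 :=
    calc s + t + 2 * r * (s + 1) = G.biHoleNumber + 1 + r * (2 * (s + 1)) := by rw [hst_eq]; ring
      _ ≤ G.biHoleNumber + 1 + r * (G.biHoleNumber + 3) := by gcongr
      _ = (r + 1) * G.biHoleNumber + 3 * r + 1 := by ring
      _ ≤ G.minDegree + 1 := by gcongr
  exact BipartiteHole.hasEdgeDisjointHamiltonianCycles_of_not_hasBipartiteHole G hn r hs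
    (hs.trans_le hst) hole hdeg
end

section
/- Let r ≥ 1 and let H₁, …, H_r be Hamilton cycles of a finite simple graph G (each H_i is a spanning cycle of G, viewed as a set of edges of G). Let H = H₁ ∪ … ∪ H_r and let G − H denote the graph on the same vertex set whose edge set is E(G) with all edges of H removed. Then α̃(G − H) + 1 ≤ (r + 1)(α̃(G) + 1). -/
/-!
Write `α̃(G) + 1 = s + t` with `s ≤ t` and no `(s, t)`-bipartite-hole in `G`. If `H` has maximum
degree at most `d`, any `s` vertices have at most `d * s` `H`-neighbours in total, so deleting `H`
cannot create an `(s, t + d * s)`-bipartite-hole: discarding these neighbours from its second side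
would leave an `(s, t)`-bipartite-hole of `G`. As `2 * s ≤ s + t`, this gives
`2 * (α̃(G - H) + 1) ≤ (d + 2) * (α̃(G) + 1)`, and a union of `r` cycles has maximum degree at most
`2 * r`.
-/

section

variable {V : Type*} {G H : SimpleGraph V} {d s t : ℕ}

theorem hasBipartiteHole_symm (h : G.HasBipartiteHole s t) : G.HasBipartiteHole t s := by
  obtain ⟨S, T, hdisj, hS, hT, hnadj⟩ := h
  exact ⟨T, S, hdisj.symm, hT, hS, fun b hb a ha hba => hnadj a ha b hb hba.symm⟩

theorem exists_not_hasBipartiteHole [Finite V] (G : SimpleGraph V) :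
    ∃ s t : ℕ, 0 < s ∧ 0 < t ∧ ¬ G.HasBipartiteHole s t := by
  cases nonempty_fintype V
  refine ⟨Fintype.card V + 1, 1, Nat.succ_pos _, Nat.one_pos, ?_⟩
  rintro ⟨S, -, -, hS, -⟩
  exact (Nat.lt_succ_self _).not_ge (hS ▸ S.card_le_univ)

theorem biHoleNumber_add_one_le (hs : 0 < s) (ht : 0 < t) (h : ¬ G.HasBipartiteHole s t) :
    G.biHoleNumber + 1 ≤ s + t := by
  have hle : G.biHoleNumber ≤ s + t - 1 := Nat.sInf_le ⟨s, t, hs, ht, rfl, h⟩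
  omega

-- If `G` has `(s, t)`-holes for all positive `s` and `t`, then `biHoleNumber` is `sInf ∅ = 0`.
theorem exists_not_hasBipartiteHole_add_eq_biHoleNumber_add_one
    (hG : ∃ s t : ℕ, 0 < s ∧ 0 < t ∧ ¬ G.HasBipartiteHole s t) :
    ∃ s t : ℕ, 0 < s ∧ s ≤ t ∧ s + t = G.biHoleNumber + 1 ∧ ¬ G.HasBipartiteHole s t := by
  have hne : {r : ℕ | ∃ s t : ℕ, 0 < s ∧ 0 < t ∧ r = s + t - 1 ∧
      ¬ G.HasBipartiteHole s t}.Nonempty := by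
    obtain ⟨s, t, hs, ht, h⟩ := hG
    exact ⟨s + t - 1, s, t, hs, ht, rfl, h⟩
  obtain ⟨s, t, hs, ht, hst, h⟩ : ∃ s t : ℕ, 0 < s ∧ 0 < t ∧ G.biHoleNumber = s + t - 1 ∧
      ¬ G.HasBipartiteHole s t := Nat.sInf_mem hne
  rcases le_total s t with hle | hle
  · exact ⟨s, t, hs, hle, by omega, h⟩
  · exact ⟨t, s, ht, hle, by omega, fun h' => h (hasBipartiteHole_symm h')⟩

theorem hasBipartiteHole_of_sdiff (hd : ∀ v, (H.neighborSet v).encard ≤ d)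
    (h : (G \ H).HasBipartiteHole s (t + d * s)) : G.HasBipartiteHole s t := by
  classical
  obtain ⟨S, T, hdisj, hS, hT, hnadj⟩ := h
  let N := S.biUnion fun v => {w ∈ T | H.Adj v w}
  have hN : N.card ≤ d * s := by
    rw [← hS, mul_comm]
    refine Finset.card_biUnion_le_card_mul _ _ _ fun v _ => ?_
    have hsub : (({w ∈ T | H.Adj v w} : Finset V) : Set V) ⊆ H.neighborSet v :=
      fun w hw => (Finset.mem_filter.1 hw).2
    rw [← Nat.cast_le (α := ℕ∞), ← Set.encard_coe_eq_coe_finsetCard]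
    exact (Set.encard_le_encard hsub).trans (hd v)
  have ht : t ≤ (T \ N).card := by
    have hsdiff : T.card - N.card ≤ (T \ N).card := Finset.le_card_sdiff N T
    omega
  obtain ⟨T', hT', hcard⟩ := Finset.exists_subset_card_eq ht
  refine ⟨S, T', hdisj.mono_right (hT'.trans Finset.sdiff_subset), hS, hcard, ?_⟩
  intro a ha b hb hab
  obtain ⟨hbT, hbN⟩ := Finset.mem_sdiff.1 (hT' hb)
  have hnH : ¬ H.Adj a b := fun hH =>
    hbN (Finset.mem_biUnion.2 ⟨a, ha, Finset.mem_filter.2 ⟨hbT, hH⟩⟩)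
  exact hnadj a ha b hbT ((SimpleGraph.sdiff_adj G H a b).2 ⟨hab, hnH⟩)

theorem two_mul_biHoleNumber_sdiff_add_one_le
    (hG : ∃ s t : ℕ, 0 < s ∧ 0 < t ∧ ¬ G.HasBipartiteHole s t)
    (hd : ∀ v, (H.neighborSet v).encard ≤ d) :
    2 * ((G \ H).biHoleNumber + 1) ≤ (d + 2) * (G.biHoleNumber + 1) := by
  obtain ⟨s, t, hs, hst, heq, h⟩ := exists_not_hasBipartiteHole_add_eq_biHoleNumber_add_one hG
  have hle : (G \ H).biHoleNumber + 1 ≤ s + (t + d * s) :=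
    biHoleNumber_add_one_le hs (by omega) fun h' => h (hasBipartiteHole_of_sdiff hd h')
  calc 2 * ((G \ H).biHoleNumber + 1)
      ≤ 2 * (s + (t + d * s)) := Nat.mul_le_mul_left 2 hle
    _ = d * (s + s) + 2 * (s + t) := by ring
    _ ≤ d * (s + t) + 2 * (s + t) := by gcongr
    _ = (d + 2) * (G.biHoleNumber + 1) := by rw [← heq, add_mul]

theorem encard_neighborSet_toSubgraph_le_two_of_isCycle {u : V} {c : G.Walk u u} (hc : c.IsCycle)
    (v : V) : (c.toSubgraph.neighborSet v).encard ≤ 2 := by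
  by_cases hv : v ∈ c.support
  · rw [← c.finite_neighborSet_toSubgraph.cast_ncard_eq,
      hc.ncard_neighborSet_toSubgraph_eq_two hv, Nat.cast_ofNat]
  · have hempty : c.toSubgraph.neighborSet v = ∅ :=
      Set.eq_empty_of_forall_notMem fun w hw =>
        hv (c.mem_verts_toSubgraph.1 (c.toSubgraph.edge_vert hw))
    simp only [hempty, Set.encard_empty, zero_le]

variable {ι : Type*} [Fintype ι] {c : ι → Σ u : V, G.Walk u u}

theorem encard_neighborSet_fromEdgeSet_iUnion_edges_le (hc : ∀ i, (c i).2.IsCycle) (v : V) :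
    ((SimpleGraph.fromEdgeSet (⋃ i, {e | e ∈ (c i).2.edges})).neighborSet v).encard ≤
      (Fintype.card ι * 2 : ℕ) := by
  have hsub : (SimpleGraph.fromEdgeSet (⋃ i, {e | e ∈ (c i).2.edges})).neighborSet v ⊆
      ⋃ i, (c i).2.toSubgraph.neighborSet v := by
    intro w hw
    obtain ⟨i, hi⟩ := Set.mem_iUnion.1 ((SimpleGraph.fromEdgeSet_adj _).1 hw).1
    exact Set.mem_iUnion.2 ⟨i, SimpleGraph.Walk.adj_toSubgraph_iff_mem_edges.2 hi⟩
  calc ((SimpleGraph.fromEdgeSet (⋃ i, {e | e ∈ (c i).2.edges})).neighborSet v).encard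
      ≤ (⋃ i, (c i).2.toSubgraph.neighborSet v).encard := Set.encard_le_encard hsub
    _ ≤ ∑ i, ((c i).2.toSubgraph.neighborSet v).encard := Set.encard_iUnion_le_of_fintype _
    _ ≤ ∑ _i : ι, 2 :=
      Finset.sum_le_sum fun i _ => encard_neighborSet_toSubgraph_le_two_of_isCycle (hc i) v
    _ = (Fintype.card ι * 2 : ℕ) := by
      simp only [Finset.sum_const, Finset.card_univ, nsmul_eq_mul, Nat.cast_mul, Nat.cast_ofNat]

theorem biHoleNumber_deleteEdges_le_general
    (hG : ∃ s t : ℕ, 0 < s ∧ 0 < t ∧ ¬ G.HasBipartiteHole s t) (hc : ∀ i, (c i).2.IsCycle) :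
    (G.deleteEdges (⋃ i, {e | e ∈ (c i).2.edges})).biHoleNumber + 1 ≤
      (Fintype.card ι + 1) * (G.biHoleNumber + 1) := by
  have hle := two_mul_biHoleNumber_sdiff_add_one_le hG
    (encard_neighborSet_fromEdgeSet_iUnion_edges_le hc)
  rw [← SimpleGraph.deleteEdges] at hle
  linarith

end

theorem biHoleNumber_deleteEdges_le
    {V : Type*} [Fintype V] [DecidableEq V] (G : SimpleGraph V)
    (r : ℕ) (hr : 1 ≤ r) (c : Fin r → Σ a : V, G.Walk a a)
    (hham : ∀ i, (c i).2.IsHamiltonianCycle) :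
    (G.deleteEdges (⋃ i, {e | e ∈ (c i).2.edges})).biHoleNumber + 1 ≤
      (r + 1) * (G.biHoleNumber + 1) := by
  simpa only [Fintype.card_fin] using
    biHoleNumber_deleteEdges_le_general (exists_not_hasBipartiteHole G) fun i => (hham i).isCycle
end

section
/- Let v₁, v₂, …, v_n (n ≥ 3) be a path in a simple graph G, i.e. the vertices are pairwise distinct and v_i is adjacent to v_{i+1} for 1 ≤ i < n. If for some index j with 1 < j < n the vertex v_j is adjacent to v₁ and the vertex v_{j−1} is adjacent to v_n, then G contains a cycle whose vertex set is exactly {v₁, …, v_n}; in particular the induced subgraph of G on {v₁, …, v_n} is Hamiltonian. -/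
/-!
Deleting the edge between `v (j - 1)` and `v j` splits the path into `v 0, …, v (j - 1)` and
`v j, …, v (n - 1)`. Once the second piece is reversed, the two given chords are exactly the edges
joining the end of each piece to the start of the other, so the pieces close up to the cycle
`v 0, …, v (j - 1), v (n - 1), …, v j, v 0`.
-/

open SimpleGraph

section Gluing

variable {V : Type*} {G : SimpleGraph V} {a b c d : V}

theorem start_notMem_tail_support_of_isPath {p : G.Walk a b} (hp : p.IsPath) :
    a ∉ p.support.tail :=
  (List.nodup_cons.mp (p.cons_tail_support ▸ hp.support_nodup)).1

theorem isCycle_concat_append_concat {p : G.Walk a b} {q : G.Walk c d} (hp : p.IsPath)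
    (hq : q.IsPath) (hdisj : p.support.Disjoint q.support) (hbc : G.Adj b c) (hda : G.Adj d a)
    (hne : a ≠ b ∨ c ≠ d) : ((p.concat hbc).append (q.concat hda)).IsCycle := by
  have hc : c ∉ p.support := fun h => hdisj h q.start_mem_support
  have ha : a ∉ q.support := hdisj p.start_mem_support
  have hac : a ≠ c := fun h => ha (h ▸ q.start_mem_support)
  have htails : p.support.tail.Disjoint q.support.tail :=
    fun _ hxp hxq => hdisj (List.mem_of_mem_tail hxp) (List.mem_of_mem_tail hxq)
  refine (hp.concat hc hbc).isCycle_append (hq.concat ha hda) ?_ ?_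
  · simp [Walk.support_concat, List.tail_append_of_ne_nil (Walk.support_ne_nil _), htails, hac,
      start_notMem_tail_support_of_isPath hp, start_notMem_tail_support_of_isPath hq]
  · simp only [Walk.length_concat, Nat.lt_add_left_iff_pos, ← Walk.not_nil_iff_lt_length]
    exact hne.imp Walk.not_nil_of_ne Walk.not_nil_of_ne

theorem mem_support_concat_append_concat {x : V} (p : G.Walk a b) (q : G.Walk c d)
    (hbc : G.Adj b c) (hda : G.Adj d a) :
    x ∈ ((p.concat hbc).append (q.concat hda)).support ↔ x ∈ p.support ∨ x ∈ q.support := by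
  have ha : a ∈ p.support := p.start_mem_support
  have hc : c ∈ q.support := q.start_mem_support
  grind [Walk.mem_support_append_iff, Walk.support_concat]

end Gluing

theorem exists_isPath_of_injOn_Icc {V : Type*} {G : SimpleGraph V} {v : ℕ → V} {a b : ℕ}
    (hab : a ≤ b) (hinj : Set.InjOn v (Set.Icc a b))
    (hadj : ∀ i ∈ Set.Ico a b, G.Adj (v i) (v (i + 1))) :
    ∃ p : G.Walk (v a) (v b), p.IsPath ∧ ∀ x, x ∈ p.support ↔ x ∈ v '' Set.Icc a b := by
  induction b, hab using Nat.le_induction with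
  | base => exact ⟨.nil, .nil, by simp⟩
  | succ b hab ih =>
    have hab' : a ≤ b + 1 := Nat.le_succ_of_le hab
    have hsub : Set.Icc a b ⊆ Set.Icc a (b + 1) := Set.Icc_subset_Icc_right b.le_succ
    obtain ⟨p, hp, hsupp⟩ := ih (hinj.mono hsub)
      fun i hi => hadj i (Set.Ico_subset_Ico_right b.le_succ hi)
    have hnew : v (b + 1) ∉ p.support := by
      rw [hsupp, hinj.mem_image_iff hsub (Set.right_mem_Icc.mpr hab')]
      simp
    refine ⟨p.concat (hadj b ⟨hab, b.lt_succ_self⟩), hp.concat hnew _, fun x => ?_⟩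
    have hinsert : Set.Icc a (b + 1) = insert (b + 1) (Set.Icc a b) :=
      (Set.insert_Icc_right_eq_Icc_succ hab').symm
    rw [Walk.support_concat, List.mem_append, List.mem_singleton, hsupp, hinsert,
      Set.image_insert_eq, Set.mem_insert_iff, or_comm]

/-- Situation (a): a single flip closes a maximal path into a spanning cycle.
Vertices `v 0, v 1, …, v (n-1)` (1-based `v₁, …, v_n` in the paper) form a path;
index `j` here corresponds to the paper's `j ∈ (1, n)` shifted down by one. -/
theorem cycle_of_single_flip {V : Type*} (G : SimpleGraph V) (n : ℕ) (hn : 3 ≤ n)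
    (v : ℕ → V)
    (hinj : ∀ i j, i < n → j < n → v i = v j → i = j)
    (hpath : ∀ i, i + 1 < n → G.Adj (v i) (v (i + 1)))
    (j : ℕ) (hj0 : 0 < j) (hjn : j < n - 1)
    (h1 : G.Adj (v j) (v 0))
    (h2 : G.Adj (v (j - 1)) (v (n - 1))) :
    ∃ (a : V) (c : G.Walk a a), c.IsCycle ∧
      (∀ x, x ∈ c.support ↔ ∃ i < n, v i = x) := by
  have hinjOn : Set.InjOn v (Set.Iio n) := fun i hi k hk => hinj i k hi hk
  have hleft : Set.Icc 0 (j - 1) ⊆ Set.Iio n := by grind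
  have hright : Set.Icc j (n - 1) ⊆ Set.Iio n := by grind
  have hunion : Set.Icc 0 (j - 1) ∪ Set.Icc j (n - 1) = Set.Iio n := by grind
  obtain ⟨p, hp, hp_supp⟩ := exists_isPath_of_injOn_Icc (j - 1).zero_le (hinjOn.mono hleft)
    fun i hi => hpath i (by grind)
  obtain ⟨q, hq, hq_supp⟩ := exists_isPath_of_injOn_Icc hjn.le (hinjOn.mono hright)
    fun i hi => hpath i (by grind)
  have hdisj : p.support.Disjoint q.reverse.support := by
    intro x hxp hxq
    rw [Walk.support_reverse, List.mem_reverse, hq_supp] at hxq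
    obtain ⟨i, hi, rfl⟩ := (hp_supp x).mp hxp
    have hi' : i ∈ Set.Icc j (n - 1) := (hinjOn.mem_image_iff hright (hleft hi)).mp hxq
    grind
  have hne : v (n - 1) ≠ v j := fun h => hjn.ne' (hinj _ _ (by omega) (by omega) h)
  refine ⟨v 0, (p.concat h2).append (q.reverse.concat h1),
    isCycle_concat_append_concat hp hq.reverse hdisj h2 h1 (.inr hne), fun x => ?_⟩
  rw [mem_support_concat_append_concat, Walk.support_reverse, List.mem_reverse, hp_supp, hq_supp,
    ← Set.mem_union, ← Set.image_union, hunion]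
  exact Iff.rfl
end

section
/- Let v₁, v₂, …, v_n (n ≥ 3) be a path in a simple graph G, i.e. the vertices are pairwise distinct and v_i is adjacent to v_{i+1} for 1 ≤ i < n. Suppose there exist indices i and j with 2 ≤ i ≤ j ≤ n − 1 such that v_i is adjacent to v₁, v_j is adjacent to v_n, and v_{i−1} is adjacent to v_{j+1}. Then G contains a cycle whose vertex set is exactly {v₁, …, v_n}; in particular the induced subgraph of G on {v₁, …, v_n} is Hamiltonian. -/
/-!
Cut the path into `v₁ ⋯ v_{i-1}`, `v_i ⋯ v_j` and `v_{j+1} ⋯ v_n`. Swapping the last two pieces and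
reversing the middle one gives the path `v₁ ⋯ v_{i-1} v_{j+1} ⋯ v_n v_j ⋯ v_i`, whose two new edges
are the chords `v_{i-1}v_{j+1}` and `v_n v_j`; the chord `v_i v₁` closes it into a cycle.
-/

open SimpleGraph Walk

section

variable {V : Type*} {G : SimpleGraph V} {a b c d e f : V}

theorem isCycle_cons_of_isPath_of_two_le_length {h : G.Adj b a} {p : G.Walk a b} (hp : p.IsPath)
    (hlen : 2 ≤ p.length) : (cons h p).IsCycle := by
  simpa [isCycle_iff_isPath_tail_and_le_length] using ⟨hp, hlen⟩

theorem exists_walk_support_eq_map_Ico {v : ℕ → V} {s t : ℕ} (hst : s ≤ t)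
    (hadj : ∀ k, s ≤ k → k < t → G.Adj (v k) (v (k + 1))) :
    ∃ p : G.Walk (v s) (v t), p.support = (List.Ico s (t + 1)).map v := by
  induction t, hst using Nat.le_induction with
  | base => exact ⟨nil, by simp⟩
  | succ t hst ih =>
    obtain ⟨p, hp⟩ := ih fun k hsk hkt => hadj k hsk (by lia)
    refine ⟨p.concat (hadj t hst t.lt_succ_self), ?_⟩
    rw [support_concat, hp, List.Ico.succ_top (by lia : s ≤ t + 1), List.map_append,
      List.map_singleton]

/-- The double nested flip of three walks `p : a ⟶ b`, `q : c ⟶ d`, `r : e ⟶ f`, thought of as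
consecutive pieces of one walk: traverse `p`, jump along the chord `be` to traverse `r`, then
return along the chord `fd` and traverse `q` backwards. The pieces are given as
separate walks, so that their endpoints are part of their types. -/
def nestedFlip (p : G.Walk a b) (q : G.Walk c d) (r : G.Walk e f) (hbe : G.Adj b e)
    (hdf : G.Adj d f) : G.Walk a c :=
  p.append (cons hbe (r.append (cons hdf.symm q.reverse)))

variable (p : G.Walk a b) (q : G.Walk c d) (r : G.Walk e f) (hbe : G.Adj b e) (hdf : G.Adj d f)

theorem support_nestedFlip :
    (nestedFlip p q r hbe hdf).support = p.support ++ (r.support ++ q.support.reverse) := by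
  simp [nestedFlip, support_append]

theorem length_nestedFlip :
    (nestedFlip p q r hbe hdf).length = p.length + q.length + r.length + 2 := by
  simp only [nestedFlip, length_append, length_cons, length_reverse]
  lia

theorem support_nestedFlip_perm :
    (nestedFlip p q r hbe hdf).support.Perm (p.support ++ (q.support ++ r.support)) := by
  rw [support_nestedFlip]
  exact .append_left _ (List.perm_append_comm.trans (q.support.reverse_perm.append_right _))

theorem isCycle_cons_nestedFlip (hca : G.Adj c a)
    (hnodup : (p.support ++ (q.support ++ r.support)).Nodup) :
    (cons hca (nestedFlip p q r hbe hdf)).IsCycle := by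
  refine isCycle_cons_of_isPath_of_two_le_length ?_ (by rw [length_nestedFlip]; lia)
  rwa [isPath_def, (support_nestedFlip_perm p q r hbe hdf).nodup_iff]

theorem mem_support_cons_nestedFlip (hca : G.Adj c a) {x : V} :
    x ∈ (cons hca (nestedFlip p q r hbe hdf)).support ↔
      x ∈ p.support ++ (q.support ++ r.support) := by
  rw [← (support_nestedFlip_perm p q r hbe hdf).mem_iff, support_cons, List.mem_cons,
    or_iff_right_of_imp]
  rintro rfl
  exact end_mem_support _

end

/-- Situation (b): a double nested flip closes a maximal path into a spanning cycle.
Vertices `v 0, v 1, …, v (n-1)` (1-based `v₁, …, v_n` in the paper) form a path;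
indices `i, j` here correspond to the paper's `2 ≤ i ≤ j ≤ n - 1` shifted down by one,
so `1 ≤ i ≤ j ≤ n - 2`. -/
theorem cycle_of_double_nested_flip {V : Type*} (G : SimpleGraph V) (n : ℕ) (hn : 3 ≤ n)
    (v : ℕ → V)
    (hinj : ∀ i j, i < n → j < n → v i = v j → i = j)
    (hpath : ∀ i, i + 1 < n → G.Adj (v i) (v (i + 1)))
    (i j : ℕ) (hi : 1 ≤ i) (hij : i ≤ j) (hj : j ≤ n - 2)
    (h1 : G.Adj (v i) (v 0))
    (h2 : G.Adj (v j) (v (n - 1)))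
    (h3 : G.Adj (v (i - 1)) (v (j + 1))) :
    ∃ (a : V) (c : G.Walk a a), c.IsCycle ∧
      (∀ x, x ∈ c.support ↔ ∃ k < n, v k = x) := by
  obtain ⟨p, hp⟩ := exists_walk_support_eq_map_Ico (Nat.zero_le (i - 1))
    fun k _ hk => hpath k (by lia)
  obtain ⟨q, hq⟩ := exists_walk_support_eq_map_Ico hij fun k _ hk => hpath k (by lia)
  obtain ⟨r, hr⟩ := exists_walk_support_eq_map_Ico (by lia : j + 1 ≤ n - 1)
    fun k _ hk => hpath k (by lia)
  have hsupport : p.support ++ (q.support ++ r.support) = (List.range n).map v := by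
    rw [hp, hq, hr, Nat.sub_add_cancel hi, Nat.sub_add_cancel (by lia : 1 ≤ n), ← List.map_append,
      ← List.map_append, List.Ico.append_consecutive (by lia) (by lia),
      List.Ico.append_consecutive (by lia) (by lia), List.Ico.zero_bot]
  have hnodup : ((List.range n).map v).Nodup :=
    List.nodup_range.map_on fun k hk l hl =>
      hinj k l (List.mem_range.mp hk) (List.mem_range.mp hl)
  refine ⟨v i, cons h1 (nestedFlip p q r h3 h2),
    isCycle_cons_nestedFlip p q r h3 h2 h1 (hsupport ▸ hnodup), fun x => ?_⟩
  simp only [mem_support_cons_nestedFlip, hsupport, List.mem_map, List.mem_range]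
end

section
/- For all integers a and b with 1 ≤ a ≤ b, the complement of the complete bipartite graph K_{a,b} (which is the disjoint union of a complete graph on a vertices and a complete graph on b vertices) satisfies α̃(complement of K_{a,b}) = min(b + 1, 2a + 1). -/
/-!
A hole in `Gᶜ` is a copy of a complete bipartite graph in `G`. Adjacent vertices of `K_{V,W}` lie on
opposite sides, so for `s, t > 0` a copy of `K_{s,t}` in `K_{V,W}` maps each part into one side: it
exists iff `min s t ≤ min |V| |W|` and `max s t ≤ max |V| |W|`. Among the `(s, t)` violating the
second condition, `s + t - 1` is least at `s = 1`, `t = max |V| |W| + 1`; among those violating the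
first, it is least at `s = t = min |V| |W| + 1`.
-/

open SimpleGraph

section Hole

variable {V : Type*} {G : SimpleGraph V} {s t : ℕ}

theorem hasBipartiteHole_compl_iff_isContained :
    Gᶜ.HasBipartiteHole s t ↔ completeBipartiteGraph (Fin s) (Fin t) ⊑ G := by
  rw [completeBipartiteGraph_isContained_iff]
  simp only [Fintype.card_fin]
  constructor
  · rintro ⟨S, T, hST, hS, hT, hole⟩
    refine ⟨S, T, hS, hT, fun x hx y hy ↦ ?_⟩
    have hxy : x ≠ y := Finset.disjoint_iff_ne.mp hST x hx y hy
    simpa [compl_adj, hxy] using hole x hx y hy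
  · rintro ⟨S, T, hS, hT, hadj⟩
    exact ⟨S, T, Finset.disjoint_coe.mp hadj.disjoint, hS, hT,
      fun x hx y hy h ↦ ((compl_adj ..).mp h).2 (hadj hx hy)⟩

theorem biHoleNumber_le_of_not_hasBipartiteHole (h : ¬ G.HasBipartiteHole (s + 1) (t + 1)) :
    G.biHoleNumber ≤ s + t + 1 :=
  Nat.sInf_le ⟨s + 1, t + 1, s.succ_pos, t.succ_pos, by lia, h⟩

theorem exists_biHoleNumber_eq_of_not_hasBipartiteHole
    (h : ¬ G.HasBipartiteHole (s + 1) (t + 1)) :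
    ∃ p q, G.biHoleNumber = p + q + 1 ∧ ¬ G.HasBipartiteHole (p + 1) (q + 1) := by
  have hne : {r | ∃ p q, 0 < p ∧ 0 < q ∧ r = p + q - 1 ∧ ¬ G.HasBipartiteHole p q}.Nonempty :=
    ⟨_, s + 1, t + 1, s.succ_pos, t.succ_pos, rfl, h⟩
  obtain ⟨p, q, hp, hq, hpq : G.biHoleNumber = _, hole⟩ := Nat.sInf_mem hne
  obtain ⟨p, rfl⟩ := Nat.exists_eq_add_one.mpr hp
  obtain ⟨q, rfl⟩ := Nat.exists_eq_add_one.mpr hq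
  exact ⟨p, q, by lia, hole⟩

end Hole

section Embedding

variable {α β γ : Type*}

theorem nonempty_embedding_of_forall_isLeft (f : α ↪ β ⊕ γ) (h : ∀ x, (f x).isLeft) :
    Nonempty (α ↪ β) := by
  refine ⟨fun x ↦ (f x).getLeft (h x), fun x y hxy ↦ f.injective ?_⟩
  simpa using congrArg (Sum.inl (β := γ)) hxy

theorem nonempty_embedding_of_forall_isRight (f : α ↪ β ⊕ γ) (h : ∀ x, (f x).isRight) :
    Nonempty (α ↪ γ) :=
  nonempty_embedding_of_forall_isLeft (f.trans (Equiv.sumComm β γ).toEmbedding) (by simpa using h)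

theorem nonempty_fin_embedding_iff_le_card {n : ℕ} :
    Nonempty (Fin n ↪ α) ↔ n ≤ ENat.card α := by
  rw [ENat.card, Cardinal.natCast_le_toENat, ← Cardinal.lift_mk_le', Cardinal.mk_fin,
    Cardinal.lift_natCast, Cardinal.lift_id']

end Embedding

theorem le_and_le_or_le_and_le_iff_min_le_min_and_max_le_max {α : Type*} [LinearOrder α]
    {a b c d : α} :
    (a ≤ c ∧ b ≤ d) ∨ (a ≤ d ∧ b ≤ c) ↔ min a b ≤ min c d ∧ max a b ≤ max c d := by
  grind

section CompleteBipartite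

variable {α β V W : Type*} {s t : ℕ}

theorem completeBipartiteGraph_isContained_of_embedding (f : α ↪ V) (g : β ↪ W) :
    completeBipartiteGraph α β ⊑ completeBipartiteGraph V W :=
  ⟨⟨⟨Sum.map f g, by simp⟩, f.injective.sumMap g.injective⟩⟩

theorem completeBipartiteGraph_isContained_swap :
    completeBipartiteGraph V W ⊑ completeBipartiteGraph W V :=
  ⟨⟨⟨Sum.swap, by simp⟩, Sum.swap_leftInverse.injective⟩⟩

theorem completeBipartiteGraph_isContained_completeBipartiteGraph_iff [Nonempty α] [Nonempty β] :
    completeBipartiteGraph α β ⊑ completeBipartiteGraph V W ↔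
      (Nonempty (α ↪ V) ∧ Nonempty (β ↪ W)) ∨ (Nonempty (α ↪ W) ∧ Nonempty (β ↪ V)) := by
  constructor
  · rintro ⟨φ⟩
    let f : α ↪ V ⊕ W := Function.Embedding.inl.trans φ.toEmbedding
    let g : β ↪ V ⊕ W := Function.Embedding.inr.trans φ.toEmbedding
    have opposite (x : α) (y : β) :
        (f x).isLeft ∧ (g y).isRight ∨ (f x).isRight ∧ (g y).isLeft :=
      (completeBipartiteGraph_adj ..).mp (φ.toHom.map_adj (by simp))
    obtain ⟨x₀⟩ := ‹Nonempty α›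
    obtain ⟨y₀⟩ := ‹Nonempty β›
    rcases opposite x₀ y₀ with ⟨hx₀, hy₀⟩ | ⟨hx₀, hy₀⟩
    · exact .inl ⟨nonempty_embedding_of_forall_isLeft f fun x ↦ by grind [opposite x y₀],
        nonempty_embedding_of_forall_isRight g fun y ↦ by grind [opposite x₀ y]⟩
    · exact .inr ⟨nonempty_embedding_of_forall_isRight f fun x ↦ by grind [opposite x y₀],
        nonempty_embedding_of_forall_isLeft g fun y ↦ by grind [opposite x₀ y]⟩
  · rintro (⟨⟨f⟩, ⟨g⟩⟩ | ⟨⟨f⟩, ⟨g⟩⟩)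
    · exact completeBipartiteGraph_isContained_of_embedding f g
    · exact (completeBipartiteGraph_isContained_of_embedding f g).trans
        completeBipartiteGraph_isContained_swap

theorem hasBipartiteHole_compl_completeBipartiteGraph_iff (hs : 0 < s) (ht : 0 < t) :
    (completeBipartiteGraph V W)ᶜ.HasBipartiteHole s t ↔
      min (s : ℕ∞) t ≤ min (ENat.card V) (ENat.card W) ∧
        max (s : ℕ∞) t ≤ max (ENat.card V) (ENat.card W) := by
  have := Fin.pos_iff_nonempty.mp hs
  have := Fin.pos_iff_nonempty.mp ht
  simp only [hasBipartiteHole_compl_iff_isContained,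
    completeBipartiteGraph_isContained_completeBipartiteGraph_iff,
    nonempty_fin_embedding_iff_le_card, le_and_le_or_le_and_le_iff_min_le_min_and_max_le_max]

theorem not_hasBipartiteHole_compl_completeBipartiteGraph_add_one_iff :
    ¬ (completeBipartiteGraph V W)ᶜ.HasBipartiteHole (s + 1) (t + 1) ↔
      min (ENat.card V) (ENat.card W) ≤ min (s : ℕ∞) t ∨
        max (ENat.card V) (ENat.card W) ≤ max (s : ℕ∞) t := by
  rw [hasBipartiteHole_compl_completeBipartiteGraph_iff s.succ_pos t.succ_pos,
    not_and_or, not_le, not_le, Nat.cast_add_one, Nat.cast_add_one, min_add_add_right,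
    max_add_add_right, ENat.lt_add_one_iff (by simp), ENat.lt_add_one_iff (by simp)]

theorem biHoleNumber_compl_completeBipartiteGraph_le_max_add_one :
    ((completeBipartiteGraph V W)ᶜ.biHoleNumber : ℕ∞) ≤
      max (ENat.card V) (ENat.card W) + 1 := by
  rcases eq_or_ne (max (ENat.card V) (ENat.card W)) ⊤ with hm | hm
  · simp [hm]
  · obtain ⟨m, hm⟩ := ENat.ne_top_iff_exists.mp hm
    have hole : ¬ (completeBipartiteGraph V W)ᶜ.HasBipartiteHole (0 + 1) (m + 1) :=
      not_hasBipartiteHole_compl_completeBipartiteGraph_add_one_iff.mpr (.inr (by simp [hm]))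
    rw [← hm]
    simpa using Nat.cast_le (α := ℕ∞).mpr (biHoleNumber_le_of_not_hasBipartiteHole hole)

theorem not_hasBipartiteHole_compl_completeBipartiteGraph_of_min_le {k : ℕ}
    (hk : min (ENat.card V) (ENat.card W) ≤ k) :
    ¬ (completeBipartiteGraph V W)ᶜ.HasBipartiteHole (k + 1) (k + 1) :=
  not_hasBipartiteHole_compl_completeBipartiteGraph_add_one_iff.mpr (.inl (by rwa [min_self]))

theorem min_le_add_of_not_hasBipartiteHole_compl_completeBipartiteGraph
    (h : ¬ (completeBipartiteGraph V W)ᶜ.HasBipartiteHole (s + 1) (t + 1)) :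
    min (max (ENat.card V) (ENat.card W)) (2 * min (ENat.card V) (ENat.card W)) ≤ s + t := by
  rcases not_hasBipartiteHole_compl_completeBipartiteGraph_add_one_iff.mp h with hmin | hmax
  · calc
      _ ≤ 2 * min (ENat.card V) (ENat.card W) := min_le_right ..
      _ ≤ 2 * min (s : ℕ∞) t := by gcongr 2 * ?_
      _ = min (s : ℕ∞) t + min (s : ℕ∞) t := two_mul _
      _ ≤ s + t := add_le_add (min_le_left ..) (min_le_right ..)
  · calc
      _ ≤ max (ENat.card V) (ENat.card W) := min_le_left ..
      _ ≤ max (s : ℕ∞) t := hmax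
      _ ≤ s + t := max_le le_self_add le_add_self

end CompleteBipartite

theorem biHoleNumber_compl_completeBipartiteGraph_general (V W : Type*)
    (h : Finite V ∨ Finite W) :
    ((completeBipartiteGraph V W)ᶜ.biHoleNumber : ℕ∞) =
      min (max (ENat.card V) (ENat.card W) + 1) (2 * min (ENat.card V) (ENat.card W) + 1) := by
  obtain ⟨k, hk⟩ : ∃ k : ℕ, (k : ℕ∞) = min (ENat.card V) (ENat.card W) :=
    ENat.ne_top_iff_exists.mp (by simpa [imp_iff_not_or] using h)
  have hole := not_hasBipartiteHole_compl_completeBipartiteGraph_of_min_le hk.ge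
  refine le_antisymm (le_min biHoleNumber_compl_completeBipartiteGraph_le_max_add_one ?_) ?_
  · rw [← hk, two_mul]
    exact_mod_cast biHoleNumber_le_of_not_hasBipartiteHole hole
  · obtain ⟨p, q, hpq, hole_pq⟩ := exists_biHoleNumber_eq_of_not_hasBipartiteHole hole
    rw [hpq, min_add_add_right]
    push_cast
    gcongr
    exact min_le_add_of_not_hasBipartiteHole_compl_completeBipartiteGraph hole_pq

theorem biHoleNumber_compl_completeBipartiteGraph (a b : ℕ) (ha : 1 ≤ a) (hab : a ≤ b) :
    (completeBipartiteGraph (Fin a) (Fin b))ᶜ.biHoleNumber = min (b + 1) (2 * a + 1) := by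
  rw [← Nat.cast_inj (R := ℕ∞),
    biHoleNumber_compl_completeBipartiteGraph_general _ _ (.inl inferInstance)]
  simp [hab, Nat.mono_cast.map_min, min_add_add_right]
end

section
/- Let G be a finite simple graph and let k be a positive integer. Let G' be the disjoint union of G and the complete bipartite graph K_{k−1,2k}, and let G^φ be the complement of G'. Then G contains a copy of K_{k,k} (that is, there exist disjoint vertex sets A and B in G with |A| = |B| = k such that every vertex of A is adjacent to every vertex of B) if and only if α̃(G^φ) ≥ 2k. -/
/-!
An `(s, t)`-bipartite-hole of `Gᶜ` is a copy of `K_{s,t}` in `G`, so `2k ≤ α̃(Gᶜ)` says that `G`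
contains every `K_{s,t}` with `s + t ≤ 2k`. Such a `K_{s,t}` other than `K_{k,k}` has a side with
at most `k - 1` vertices and hence embeds in `K_{k-1,2k}`, whereas `K_{k,k}` does not. As `K_{k,k}`
is connected, a copy of it in a disjoint union lies in one of the two summands.
-/

namespace BipartiteHole

open Function SimpleGraph

variable {V W U : Type*} {F : SimpleGraph U} {G : SimpleGraph V} {H : SimpleGraph W}
  {α β γ δ : Type*} {m n s t : ℕ}

theorem isContained_of_range_subset (f : Copy F H) (e : G ↪g H)
    (hfe : Set.range f ⊆ Set.range e) : F ⊑ G := by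
  choose g hg using fun u => hfe (Set.mem_range_self u)
  have map_adj {u v : U} (huv : F.Adj u v) : G.Adj (g u) (g v) := by
    rw [← e.map_adj_iff, hg, hg]
    exact f.toHom.map_adj huv
  exact ⟨⟨g, map_adj⟩, fun u v huv => f.injective (by simpa [hg] using congrArg e huv)⟩

theorem isContained_sum_iff (hF : F.Preconnected) : F ⊑ G ⊕g H ↔ F ⊑ G ∨ F ⊑ H := by
  refine ⟨fun ⟨f⟩ => ?_, Or.rec (·.trans Embedding.sumInl.isContained)
    (·.trans Embedding.sumInr.isContained)⟩
  have not_inl_inr {u v : U} {x : V} {y : W} (hu : f u = .inl x) (hv : f v = .inr y) : False :=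
    not_reachable_sum_inl_inr x y (by simpa [hu, hv] using (hF u v).map f.toHom)
  by_cases hleft : ∃ u x, f u = .inl x
  · obtain ⟨u, x, hu⟩ := hleft
    refine .inl (isContained_of_range_subset f .sumInl ?_)
    rintro _ ⟨v, rfl⟩
    rcases hv : f v with y | y
    · exact ⟨y, rfl⟩
    · exact (not_inl_inr hu hv).elim
  · refine .inr (isContained_of_range_subset f .sumInr ?_)
    rintro _ ⟨v, rfl⟩
    rcases hv : f v with y | y
    · exact (hleft ⟨v, y, hv⟩).elim
    · exact ⟨y, rfl⟩

theorem completeBipartiteGraph_preconnected [Nonempty α] [Nonempty β] :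
    (completeBipartiteGraph α β).Preconnected := by
  obtain ⟨a₀⟩ := ‹Nonempty α›
  obtain ⟨b₀⟩ := ‹Nonempty β›
  have inl_inr (a : α) (b : β) : (completeBipartiteGraph α β).Reachable (.inl a) (.inr b) :=
    Adj.reachable (by simp)
  rintro (a | b) (a' | b')
  · exact (inl_inr a b₀).trans (inl_inr a' b₀).symm
  · exact inl_inr a b'
  · exact (inl_inr a' b).symm
  · exact (inl_inr a₀ b).symm.trans (inl_inr a₀ b')

/-- The isomorphism exchanging the two sides of a complete bipartite graph; it reduces the study of
copies of one complete bipartite graph in another to those that send left vertices to the left. -/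
def completeBipartiteGraphSwap (α β : Type*) :
    completeBipartiteGraph α β ≃g completeBipartiteGraph β α where
  toEquiv := Equiv.sumComm α β
  map_rel_iff' := by simp [or_comm]

theorem completeBipartiteGraph_isContained_of_embedding (f : α ↪ γ) (g : β ↪ δ) :
    completeBipartiteGraph α β ⊑ completeBipartiteGraph γ δ :=
  ⟨⟨Sum.map f g, by simp⟩, f.injective.sumMap g.injective⟩

theorem nonempty_embedding_of_range_subset {f : α → γ} {e : β → γ} (hf : Injective f)
    (hfe : Set.range f ⊆ Set.range e) : Nonempty (α ↪ β) := by
  choose g hg using fun a => hfe (Set.mem_range_self a)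
  exact ⟨g, fun a a' h => hf (by rw [← hg, ← hg, h])⟩

theorem nonempty_embeddings_of_copy_isLeft [Nonempty β]
    (f : Copy (completeBipartiteGraph α β) (completeBipartiteGraph γ δ)) {a₀ : α}
    (ha₀ : (f (.inl a₀)).isLeft) : Nonempty (α ↪ γ) ∧ Nonempty (β ↪ δ) := by
  obtain ⟨b₀⟩ := ‹Nonempty β›
  have isLeft_iff_isRight (a : α) (b : β) : (f (.inl a)).isLeft ↔ (f (.inr b)).isRight := by
    have hab : (completeBipartiteGraph γ δ).Adj (f (.inl a)) (f (.inr b)) :=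
      f.toHom.map_adj (by simp)
    grind [completeBipartiteGraph_adj]
  have isRight_inr (b : β) : (f (.inr b)).isRight := (isLeft_iff_isRight a₀ b).mp ha₀
  have isLeft_inl (a : α) : (f (.inl a)).isLeft := (isLeft_iff_isRight a b₀).mpr (isRight_inr b₀)
  constructor
  · refine nonempty_embedding_of_range_subset (e := Sum.inl) (f.injective.comp Sum.inl_injective) ?_
    rintro _ ⟨a, rfl⟩
    exact (Sum.isLeft_iff.mp (isLeft_inl a)).imp fun _ => Eq.symm
  · refine nonempty_embedding_of_range_subset (e := Sum.inr) (f.injective.comp Sum.inr_injective) ?_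
    rintro _ ⟨b, rfl⟩
    exact (Sum.isRight_iff.mp (isRight_inr b)).imp fun _ => Eq.symm

theorem completeBipartiteGraph_isContained_completeBipartiteGraph_iff [Nonempty α] [Nonempty β] :
    completeBipartiteGraph α β ⊑ completeBipartiteGraph γ δ ↔
      Nonempty (α ↪ γ) ∧ Nonempty (β ↪ δ) ∨ Nonempty (α ↪ δ) ∧ Nonempty (β ↪ γ) := by
  constructor
  · rintro ⟨f⟩
    obtain ⟨a₀⟩ := ‹Nonempty α›
    rcases h : f (.inl a₀) with c | d
    · exact .inl (nonempty_embeddings_of_copy_isLeft f (a₀ := a₀) (by simp [h]))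
    · exact .inr (nonempty_embeddings_of_copy_isLeft
        ((completeBipartiteGraphSwap γ δ).toCopy.comp f) (a₀ := a₀)
        (by simp [completeBipartiteGraphSwap, h]))
  · rintro (⟨⟨f⟩, ⟨g⟩⟩ | ⟨⟨f⟩, ⟨g⟩⟩)
    · exact completeBipartiteGraph_isContained_of_embedding f g
    · exact (completeBipartiteGraph_isContained_of_embedding f g).trans
        (completeBipartiteGraphSwap δ γ).isContained

theorem completeBipartiteGraph_fin_isContained_sum_iff (hs : 0 < s) (ht : 0 < t) :
    completeBipartiteGraph (Fin s) (Fin t) ⊑ G ⊕g completeBipartiteGraph (Fin m) (Fin n) ↔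
      completeBipartiteGraph (Fin s) (Fin t) ⊑ G ∨ s ≤ m ∧ t ≤ n ∨ s ≤ n ∧ t ≤ m := by
  have : Nonempty (Fin s) := ⟨⟨0, hs⟩⟩
  have : Nonempty (Fin t) := ⟨⟨0, ht⟩⟩
  simp only [isContained_sum_iff completeBipartiteGraph_preconnected,
    completeBipartiteGraph_isContained_completeBipartiteGraph_iff,
    Embedding.nonempty_iff_card_le, Fintype.card_fin]

theorem completeBipartiteGraph_fin_isContained_iff :
    completeBipartiteGraph (Fin s) (Fin t) ⊑ G ↔
      ∃ A B : Finset V, Disjoint A B ∧ A.card = s ∧ B.card = t ∧ ∀ a ∈ A, ∀ b ∈ B, G.Adj a b := by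
  simp only [completeBipartiteGraph_isContained_iff, Fintype.card_fin]
  refine exists₂_congr fun A B => ⟨fun ⟨hA, hB, h⟩ => ?_, fun ⟨_, hA, hB, h⟩ => ⟨hA, hB, h⟩⟩
  exact ⟨Finset.disjoint_coe.mp h.disjoint, hA, hB, h⟩

theorem hasBipartiteHole_compl_iff :
    Gᶜ.HasBipartiteHole s t ↔ completeBipartiteGraph (Fin s) (Fin t) ⊑ G := by
  rw [completeBipartiteGraph_fin_isContained_iff]
  refine exists₂_congr fun A B => and_congr_right fun hAB => and_congr_right fun _ =>
    and_congr_right fun _ => forall₂_congr fun a ha => forall₂_congr fun b hb => ?_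
  have hab : a ≠ b := fun h => Finset.disjoint_left.mp hAB ha (h ▸ hb)
  simp [compl_adj, hab]

theorem not_hasBipartiteHole_of_card_lt [Finite V] (hs : Nat.card V < s) :
    ¬ G.HasBipartiteHole s t := by
  rintro ⟨S, -, -, rfl, -⟩
  have := Fintype.ofFinite V
  exact hs.not_ge (Nat.card_eq_fintype_card (α := V) ▸ S.card_le_univ)

theorem le_biHoleNumber_iff [Finite V] :
    n ≤ G.biHoleNumber ↔ ∀ s t : ℕ, 0 < s → 0 < t → s + t ≤ n → G.HasBipartiteHole s t := by
  constructor
  · intro h s t hs ht hst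
    by_contra hole
    have : G.biHoleNumber ≤ s + t - 1 := Nat.sInf_le ⟨s, t, hs, ht, rfl, hole⟩
    omega
  · intro h
    refine le_csInf ⟨_, Nat.card V + 1, 1, by omega, by omega, rfl,
      not_hasBipartiteHole_of_card_lt (Nat.lt_succ_self _)⟩ ?_
    rintro _ ⟨s, t, hs, ht, rfl, hole⟩
    by_contra hlt
    exact hole (h s t hs ht (by omega))

end BipartiteHole

open BipartiteHole

/-- `G` contains a copy of `K_{k,k}` iff the complement of the disjoint union of `G`
with `K_{k-1,2k}` has bipartite-hole-number at least `2k`. -/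
theorem kkk_subgraph_iff_biHoleNumber
    {V : Type*} [Fintype V] [DecidableEq V] (G : SimpleGraph V) (k : ℕ) (hk : 1 ≤ k) :
    (∃ A B : Finset V, Disjoint A B ∧ A.card = k ∧ B.card = k ∧
        ∀ a ∈ A, ∀ b ∈ B, G.Adj a b) ↔
      2 * k ≤ (G ⊕g completeBipartiteGraph (Fin (k - 1)) (Fin (2 * k)))ᶜ.biHoleNumber := by
  rw [← completeBipartiteGraph_fin_isContained_iff, le_biHoleNumber_iff]
  simp only [hasBipartiteHole_compl_iff]
  constructor
  · intro hG s t hs ht hst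
    rw [completeBipartiteGraph_fin_isContained_sum_iff hs ht]
    by_cases hst_eq : s = k ∧ t = k
    · obtain ⟨rfl, rfl⟩ := hst_eq
      exact .inl hG
    · exact .inr (by omega)
  · intro h
    have hkk := h k k hk hk (two_mul k).ge
    rw [completeBipartiteGraph_fin_isContained_sum_iff hk hk] at hkk
    exact hkk.resolve_right (by omega)
end

section
/- Fix 0 < ε < 1, let p : ℕ → ℝ satisfy 0 ≤ p(n) ≤ 1 − ε for all n, and let r : ℕ → ℕ satisfy r(n) ≥ 1 for all n. For n ≥ 1 let q(n) denote the Erdős–Rényi probability that a graph drawn from G(n, p(n)) does NOT contain r(n) pairwise edge-disjoint Hamilton cycles. Then: (i) q(n) ≥ (1 − p(n))^n for every n ≥ 1, and (ii) for every real c > 2 there exists N such that for all n ≥ N, q(n) ≤ (1 − p(n))^n · exp(c · r(n) · √n · log n). (Equivalently, n·log(1−p) ≤ log q(n) ≤ n·log(1−p) + (2 + o(1))·r·√n·log n.) -/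
open Classical in
/-- The Erdős–Rényi probability that a graph drawn from `G(n, p)` satisfies property `A`:
the sum over all simple graphs `G` on vertex set `Fin n` satisfying `A` of
`p ^ e(G) * (1 - p) ^ (C(n,2) - e(G))`. -/
noncomputable def erProb (n : ℕ) (p : ℝ) (A : SimpleGraph (Fin n) → Prop) : ℝ :=
  ∑ G : SimpleGraph (Fin n),
    if A G then p ^ G.edgeSet.ncard * (1 - p) ^ (n.choose 2 - G.edgeSet.ncard) else 0

/-- `G` contains `r` pairwise edge-disjoint Hamilton cycles. -/
def SimpleGraph.HasEdgeDisjointHamCycles {V : Type*} [DecidableEq V]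
    (G : SimpleGraph V) (r : ℕ) : Prop :=
  ∃ c : Fin r → Σ a : V, G.Walk a a,
    (∀ i, (c i).2.IsHamiltonianCycle) ∧
    ∀ i j, i ≠ j → ∀ e ∈ (c i).2.edges, e ∉ (c j).2.edges

/-
Delete a maximal family of edge-disjoint Hamilton cycles from a graph that has fewer than `r` of
them. What remains is not Hamiltonian, so by the Chvátal–Erdős theorem it has, for every `k`, an
independent set of `k + 1` vertices or a separator of fewer than `k` vertices. The deleted cycles
have few edges inside any vertex set and leaving any vertex set, so the original graph has a
`(k + 1)`-set spanning few edges or a cut `A`, `B` with few edges, disjoint from a small set `S`.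

In `G(n, p)` a union bound over these configurations applies. With `k` slightly larger than
`√(2 n)` a `(k + 1)`-set has more than `n` pairs, and the cuts are dominated by those with `#A = 1`,
so that each contribution is `(1 - p) ^ n` up to a factor `exp (O(k r log n))`. Conversely, a graph
with an isolated vertex has no Hamilton cycle.
-/

section ChvatalErdos

open Finset

variable {V : Type*} {G : SimpleGraph V}

/-- `C` lists, in cyclic order, distinct vertices of which cyclically consecutive ones are adjacent.
Unlike for `SimpleGraph.Walk.IsCycle`, the two endpoints of an edge qualify. -/
structure IsVertexCycle (G : SimpleGraph V) (C : Cycle V) : Prop where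
  nodup : C.Nodup
  chain : C.Chain G.Adj

namespace IsVertexCycle

theorem of_isPath {z x : V} {q : G.Walk z x} (hq : q.IsPath) (hxz : G.Adj x z) :
    IsVertexCycle G ↑q.support where
  nodup := Cycle.nodup_coe_iff.2 hq.support_nodup
  chain := by
    have hclosed := (q.concat hxz).isChain_adj_support
    rw [SimpleGraph.Walk.support_concat, ← q.cons_tail_support] at hclosed
    rw [← q.cons_tail_support]
    exact hclosed

theorem append_of_disjoint {z x u w : V} {q : G.Walk z x} {P : G.Walk u w} (hq : q.IsPath)
    (hP : P.IsPath) (hdisj : q.support.Disjoint P.support) (hxu : G.Adj x u) (hwz : G.Adj w z) :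
    IsVertexCycle G ↑(q.support ++ P.support) := by
  have hsupp : (q.append (.cons hxu P)).support = q.support ++ P.support := by
    simp [SimpleGraph.Walk.support_append]
  rw [← hsupp]
  refine of_isPath (SimpleGraph.Walk.IsPath.mk' ?_) hwz
  rw [hsupp]
  exact hq.support_nodup.append hP.support_nodup hdisj

theorem exists_length_max [Finite V] (G : SimpleGraph V) :
    ∃ C, IsVertexCycle G C ∧ ∀ D, IsVertexCycle G D → D.length ≤ C.length := by
  classical
  cases nonempty_fintype V
  have hfin : {C : Cycle V | C.Nodup}.Finite :=
    Set.finite_coe_iff.1 (inferInstanceAs (Finite {C : Cycle V // C.Nodup}))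
  exact Set.exists_max_image _ Cycle.length (hfin.subset fun _ hC => hC.nodup)
    ⟨Cycle.nil, Cycle.nodup_nil, Cycle.Chain.nil _⟩

variable {C : Cycle V}

theorem not_adj_of_length_max (hmax : ∀ D, IsVertexCycle G D → D.length ≤ C.length) {z x u w : V}
    {q : G.Walk z x} (hq : q.IsPath) (hqC : ∀ v ∈ q.support, v ∈ C)
    (hlen : q.support.length = C.length)
    {P : G.Walk u w} (hP : P.IsPath) (hPC : ∀ v ∈ P.support, v ∉ C) (hxu : G.Adj x u) :
    ¬ G.Adj w z := by
  intro hwz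
  have hlonger := hmax _ <|
    append_of_disjoint hq hP (fun v hvq hvP => hPC v hvP (hqC v hvq)) hxu hwz
  simp [← hlen] at hlonger

theorem exists_mem_of_length_max (hmax : ∀ D, IsVertexCycle G D → D.length ≤ C.length)
    (hG : G ≠ ⊥) : ∃ x, x ∈ C := by
  obtain ⟨a, b, hab⟩ := G.ne_bot_iff_exists_adj.1 hG
  have hlen : 2 ≤ C.length := hmax _ (of_isPath hab.isPath_toWalk hab.symm)
  obtain ⟨l, rfl⟩ := Quot.exists_rep C
  exact List.exists_mem_of_length_pos (two_pos.trans_le hlen)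

variable [DecidableEq V]

theorem exists_isPath_support_eq (hC : IsVertexCycle G C) {x : V} (hx : x ∈ C) :
    ∃ (z : V) (q : G.Walk z x),
      C.formPerm hC.nodup x = z ∧ G.Adj x z ∧ q.IsPath ∧ ↑q.support = C := by
  obtain ⟨l, rfl⟩ : ∃ l : List V, C = ↑(x :: l) := by
    obtain ⟨l, rfl⟩ := Quot.exists_rep C
    obtain ⟨s, t, rfl⟩ := List.append_of_mem hx
    exact ⟨t ++ s, Cycle.coe_eq_coe.2 List.isRotated_append⟩
  have hchain := (Cycle.chain_coe_cons ..).1 hC.chain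
  rcases l with _ | ⟨z, l⟩
  · exact absurd ((Cycle.chain_singleton _ _).1 hC.chain) G.irrefl
  have hrot : (↑(x :: z :: l) : Cycle V) = ↑(z :: l ++ [x]) := Cycle.coe_cons_eq_coe_append _ _
  obtain ⟨q, hq⟩ : ∃ q : G.Walk z x, q.support = z :: l ++ [x] :=
    ⟨(SimpleGraph.Walk.ofSupport _ (List.cons_ne_nil _ _) hchain.of_cons).copy rfl (by simp),
      (SimpleGraph.Walk.support_copy ..).trans (SimpleGraph.Walk.support_ofSupport ..)⟩
  refine ⟨z, q, List.formPerm_apply_head x z l (Cycle.nodup_coe_iff.1 hC.nodup), hchain.rel,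
    SimpleGraph.Walk.IsPath.mk' ?_, by rw [hq, hrot]⟩
  exact hq ▸ Cycle.nodup_coe_iff.1 (hrot ▸ hC.nodup)

theorem formPerm_mem (hC : IsVertexCycle G C) {x : V} (hx : x ∈ C) :
    C.formPerm hC.nodup x ∈ C := by
  rw [Cycle.formPerm_apply_mem_eq_next _ _ _ hx]
  exact C.next_mem hC.nodup x hx

theorem formPerm_eq_of_eq_coe_append (hC : C.Nodup) {s t : List V} {y z : V}
    (h : C = ↑(s ++ y :: z :: t)) : C.formPerm hC y = z := by
  obtain rfl : C = ↑(y :: z :: t ++ s) := h.trans (Cycle.coe_eq_coe.2 List.isRotated_append)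
  exact List.formPerm_apply_head _ _ _ (Cycle.nodup_coe_iff.1 hC)

theorem exists_support_eq_append (hC : C.Nodup) {z x y : V} {q : G.Walk z x}
    (hqC : ↑q.support = C) (hy : y ∈ q.support) (hyx : y ≠ x) :
    ∃ (y' : V) (s : G.Walk z y) (t : G.Walk y' x),
      C.formPerm hC y = y' ∧ q.support = s.support ++ t.support := by
  rcases ht : q.dropUntil y hy with _ | ⟨hadj, t⟩
  · exact absurd rfl hyx
  have hsplit : q.support = (q.takeUntil y hy).support ++ t.support := by
    conv_lhs => rw [← q.take_spec hy, ht]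
    simp [SimpleGraph.Walk.support_append]
  refine ⟨_, q.takeUntil y hy, t, formPerm_eq_of_eq_coe_append hC (t := t.support.tail)
    (s := (q.takeUntil y hy).support.dropLast) ?_, hsplit⟩
  rw [t.cons_tail_support, ← hqC, hsplit]
  have hlast : (q.takeUntil y hy).support.dropLast ++ [y] = (q.takeUntil y hy).support := by
    simpa only [SimpleGraph.Walk.getLast_support] using
      List.dropLast_append_getLast (q.takeUntil y hy).support_ne_nil
  conv_lhs => rw [← hlast]
  rw [List.append_assoc, List.singleton_append]

theorem formPerm_ne_and_not_adj_of_length_max (hC : IsVertexCycle G C)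
    (hmax : ∀ D, IsVertexCycle G D → D.length ≤ C.length) {x y u w : V} (hx : x ∈ C) (hy : y ∈ C)
    {P : G.Walk u w} (hP : P.IsPath) (hPC : ∀ v ∈ P.support, v ∉ C) (hxu : G.Adj x u)
    (hyw : G.Adj y w) :
    C.formPerm hC.nodup x ≠ y ∧ ¬ G.Adj (C.formPerm hC.nodup x) (C.formPerm hC.nodup y) := by
  obtain ⟨z, q, hz, -, hq, hqC⟩ := hC.exists_isPath_support_eq hx
  have hmem : ∀ v, v ∈ q.support ↔ v ∈ C := fun v => by rw [← hqC, Cycle.mem_coe_iff]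
  have hlen : q.support.length = C.length := by rw [← hqC, Cycle.length_coe]
  rw [hz]
  refine ⟨?_, fun hadj => ?_⟩
  · rintro rfl
    exact not_adj_of_length_max hmax hq (fun v => (hmem v).1) hlen hP hPC hxu hyw.symm
  have hyx : y ≠ x := by
    rintro rfl
    exact G.irrefl (hz ▸ hadj)
  obtain ⟨y', s, t, hy', hst⟩ :=
    exists_support_eq_append hC.nodup hqC ((hmem y).2 hy) hyx
  rw [hy'] at hadj
  have hperm : (s.reverse.append (.cons hadj t)).support.Perm q.support := by
    simp [SimpleGraph.Walk.support_append, hst, List.perm_append_right_iff, List.reverse_perm]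
  exact not_adj_of_length_max hmax (.mk' (hperm.nodup_iff.2 hq.support_nodup))
    (fun v hv => (hmem v).1 (hperm.mem_iff.1 hv)) (hperm.length_eq.trans hlen) hP hPC hxu hyw.symm

theorem isIndepSet_insert_image_formPerm (hC : IsVertexCycle G C)
    (hmax : ∀ D, IsVertexCycle G D → D.length ≤ C.length) {H : Set V}
    (hH : ∀ u ∈ H, ∀ w ∈ H, ∃ P : G.Walk u w, P.IsPath ∧ ∀ v ∈ P.support, v ∉ C) {v : V}
    (hv : v ∈ H) :
    G.IsIndepSet (insert v (C.formPerm hC.nodup '' {x | x ∈ C ∧ ∃ u ∈ H, G.Adj x u})) := by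
  have hsep : ∀ x ∈ C, ∀ u ∈ H, G.Adj x u → ∀ y ∈ C, ∀ w ∈ H, G.Adj y w →
      C.formPerm hC.nodup x ≠ y ∧ ¬ G.Adj (C.formPerm hC.nodup x) (C.formPerm hC.nodup y) := by
    intro x hx u hu hxu y hy w hw hyw
    obtain ⟨P, hP, hPC⟩ := hH u hu w hw
    exact hC.formPerm_ne_and_not_adj_of_length_max hmax hx hy hP hPC hxu hyw
  rw [SimpleGraph.IsIndepSet, Set.pairwise_insert]
  refine ⟨?_, ?_⟩
  · rintro _ ⟨x, ⟨hx, u, hu, hxu⟩, rfl⟩ _ ⟨y, ⟨hy, w, hw, hyw⟩, rfl⟩ -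
    exact (hsep x hx u hu hxu y hy w hw hyw).2
  · rintro _ ⟨x, ⟨hx, u, hu, hxu⟩, rfl⟩ -
    have hnadj : ¬ G.Adj (C.formPerm hC.nodup x) v := fun hadj =>
      (hsep x hx u hu hxu _ (hC.formPerm_mem hx) v hv hadj).1 rfl
    exact ⟨fun hadj => hnadj hadj.symm, hnadj⟩

omit [DecidableEq V] in
theorem exists_mem_not_adj_of_length_max (hC : IsVertexCycle G C)
    (hmax : ∀ D, IsVertexCycle G D → D.length ≤ C.length) {H : Set V}
    (hH : ∀ u ∈ H, ∀ w ∈ H, ∃ P : G.Walk u w, P.IsPath ∧ ∀ v ∈ P.support, v ∉ C) (hG : G ≠ ⊥) :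
    ∃ x ∈ C, ∀ u ∈ H, ¬ G.Adj x u := by
  classical
  by_contra! hadj
  obtain ⟨x, hx⟩ := exists_mem_of_length_max hmax hG
  obtain ⟨u, hu, hxu⟩ := hadj x hx
  obtain ⟨w, hw, hxw⟩ := hadj _ (hC.formPerm_mem hx)
  obtain ⟨P, hP, hPC⟩ := hH u hu w hw
  exact (hC.formPerm_ne_and_not_adj_of_length_max hmax hx (hC.formPerm_mem hx) hP hPC hxu hxw).1 rfl

theorem isHamiltonian [Fintype V] (hC : IsVertexCycle G C) (hV : 3 ≤ Fintype.card V)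
    (hall : ∀ v, v ∈ C) : G.IsHamiltonian := by
  intro _
  obtain ⟨x⟩ : Nonempty V := Fintype.card_pos_iff.1 (by omega)
  obtain ⟨z, q, -, hxz, hq, rfl⟩ := hC.exists_isPath_support_eq (hall x)
  have hlen := (hq.isHamiltonian_of_mem hall).length_eq
  refine ⟨x, .cons hxz q, ?_⟩
  rw [SimpleGraph.Walk.isHamiltonianCycle_iff_isCycle_and_length_eq,
    SimpleGraph.Walk.isCycle_iff_isPath_tail_and_le_length]
  exact ⟨⟨by simpa using hq, by simp only [SimpleGraph.Walk.length_cons]; omega⟩,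
    by simp only [SimpleGraph.Walk.length_cons]; omega⟩

end IsVertexCycle

theorem exists_path_connected_subset (G : SimpleGraph V) {s : Set V} {v : V} (hv : v ∈ s) :
    ∃ H ⊆ s, v ∈ H ∧ (∀ u ∈ H, ∀ w ∈ H, ∃ P : G.Walk u w, P.IsPath ∧ ∀ x ∈ P.support, x ∈ s) ∧
      ∀ u ∈ H, ∀ w ∈ s, G.Adj u w → w ∈ H := by
  let c := (G.induce s).connectedComponentMk ⟨v, hv⟩
  refine ⟨(↑) '' c.supp, Subtype.coe_image_subset s _, ⟨⟨v, hv⟩, rfl, rfl⟩, ?_, ?_⟩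
  · rintro _ ⟨u, hu, rfl⟩ _ ⟨w, hw, rfl⟩
    obtain ⟨P, hP⟩ := (c.reachable_of_mem_supp hu hw).exists_isPath
    refine ⟨P.map (SimpleGraph.Embedding.induce s).toHom, hP.map Subtype.val_injective,
      fun x hx => ?_⟩
    obtain ⟨y, -, rfl⟩ := List.mem_map.1 (SimpleGraph.Walk.support_map .. ▸ hx)
    exact y.2
  · rintro _ ⟨u, hu, rfl⟩ w hw huw
    exact ⟨⟨w, hw⟩, c.mem_supp_of_adj_mem_supp hu huw, rfl⟩

/-- The Chvátal–Erdős theorem, in contrapositive form. -/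
theorem exists_isNIndepSet_or_separator [Fintype V] [DecidableEq V] (hV : 3 ≤ Fintype.card V)
    (hG : ¬ G.IsHamiltonian) (k : ℕ) :
    (∃ I, G.IsNIndepSet (k + 1) I) ∨ ∃ A S : Finset V, A.Nonempty ∧ (A ∪ S)ᶜ.Nonempty ∧
      Disjoint A S ∧ #S < k ∧ ∀ u ∈ A, ∀ w ∈ (A ∪ S)ᶜ, ¬ G.Adj u w := by
  classical
  obtain ⟨C, hC, hmax⟩ := IsVertexCycle.exists_length_max G
  obtain ⟨v, hv⟩ : ∃ v, v ∉ C := by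
    by_contra! hall
    exact hG (hC.isHamiltonian hV hall)
  rcases eq_or_ne G ⊥ with rfl | hbot
  · rcases k with _ | k
    · exact .inl ⟨{v}, by simp [SimpleGraph.isNIndepSet_iff]⟩
    · refine .inr ⟨{v}, ∅, singleton_nonempty v, ?_, disjoint_empty_right _, by simp, by simp⟩
      rw [← card_pos, card_compl, union_empty, card_singleton]
      omega
  obtain ⟨H, hHC, hvH, hH, hHadj⟩ := exists_path_connected_subset G (s := {v | v ∉ C}) hv
  have hindep := hC.isIndepSet_insert_image_formPerm hmax hH hvH
  obtain ⟨x, hxC, hxH⟩ := hC.exists_mem_not_adj_of_length_max hmax hH hbot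
  let N : Finset V := {x | x ∈ C ∧ ∃ u ∈ H, G.Adj x u}
  have hN : ∀ x, x ∈ N ↔ x ∈ C ∧ ∃ u ∈ H, G.Adj x u := fun x => by simp [N]
  rcases le_or_gt k #N with hk | hk
  · obtain ⟨N', hN', rfl⟩ := exists_subset_card_eq hk
    refine .inl ⟨insert v (N'.image (C.formPerm hC.nodup)), hindep.mono ?_, ?_⟩
    · rw [coe_insert, coe_image]
      exact Set.insert_subset_insert (Set.image_mono fun x hx => (hN x).1 (hN' hx))
    · rw [card_insert_of_notMem, card_image_of_injective _ (Equiv.injective _)]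
      rintro hvN
      obtain ⟨x, hx, rfl⟩ := mem_image.1 hvN
      exact hv (hC.formPerm_mem ((hN x).1 (hN' hx)).1)
  · refine .inr ⟨H.toFinset, N, ⟨v, by simpa⟩, ⟨x, ?_⟩, disjoint_left.2 fun x hxH hxN => ?_, hk, ?_⟩
    · simp only [mem_compl, mem_union, Set.mem_toFinset, hN, not_or, not_and, not_exists]
      exact ⟨fun h => hHC h hxC, fun _ => hxH⟩
    · exact hHC (Set.mem_toFinset.1 hxH) ((hN x).1 hxN).1
    · intro u hu w hw huw
      simp only [mem_compl, mem_union, Set.mem_toFinset, hN, not_or, not_and, not_exists] at hu hw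
      exact hw.1 (hHadj u hu w (fun hwC => hw.2 hwC u hu huw.symm) huw)

end ChvatalErdos

section SparseStructures

open Finset

variable {V : Type*} [DecidableEq V] {G : SimpleGraph V}

/-- The unordered pairs of distinct elements of `I`: the potential edges inside `I`. -/
def pairsIn (I : Finset V) : Finset (Sym2 V) := I.offDiag.image (Function.uncurry Sym2.mk)

/-- The unordered pairs with an element in `A` and an element in `B`: for disjoint `A` and `B`, the
potential edges between them. -/
def pairsBetween (A B : Finset V) : Finset (Sym2 V) := (A ×ˢ B).image (Function.uncurry Sym2.mk)

theorem mk_mem_pairsIn {I : Finset V} {u v : V} : s(u, v) ∈ pairsIn I ↔ u ∈ I ∧ v ∈ I ∧ u ≠ v := by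
  simp only [pairsIn, mem_image, mem_offDiag, Prod.exists, Function.uncurry_apply_pair, Sym2.eq_iff]
  grind

theorem mk_mem_pairsBetween {A B : Finset V} {u v : V} :
    s(u, v) ∈ pairsBetween A B ↔ u ∈ A ∧ v ∈ B ∨ v ∈ A ∧ u ∈ B := by
  simp only [pairsBetween, mem_image, mem_product, Prod.exists, Function.uncurry_apply_pair,
    Sym2.eq_iff]
  grind

theorem card_pairsIn (I : Finset V) : #(pairsIn I) = (#I).choose 2 := Sym2.card_image_offDiag I

theorem card_pairsBetween {A B : Finset V} (h : Disjoint A B) :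
    #(pairsBetween A B) = #A * #B := by
  rw [pairsBetween, card_image_of_injOn, card_product]
  rintro ⟨a, b⟩ hab ⟨a', b'⟩ hab' heq
  rw [mem_coe, mem_product] at hab hab'
  rcases Sym2.eq_iff.1 heq with ⟨h1, h2⟩ | ⟨h1, -⟩
  · exact Prod.ext h1 h2
  · exact absurd (h1 ▸ hab.1) (disjoint_right.1 h hab'.2)

theorem card_pairsBetween_succ_le [Fintype V] {A B : Finset V} (h : Disjoint A B) :
    #(pairsBetween A B) + 1 ≤ (Fintype.card V + 1) ^ 2 := by
  have := Nat.mul_le_mul (card_le_univ A) (card_le_univ B)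
  rw [card_pairsBetween h]
  linarith [sq (Fintype.card V + 1)]

theorem pairsIn_subset_compl_diagSet (I : Finset V) :
    (pairsIn I : Set (Sym2 V)) ⊆ Sym2.diagSetᶜ := by
  rintro ⟨u, v⟩ h
  exact (mk_mem_pairsIn.1 h).2.2

theorem pairsBetween_subset_compl_diagSet {A B : Finset V} (h : Disjoint A B) :
    (pairsBetween A B : Set (Sym2 V)) ⊆ Sym2.diagSetᶜ := by
  rintro ⟨u, v⟩ huv
  rcases mk_mem_pairsBetween.1 huv with ⟨hu, hv⟩ | ⟨hv, hu⟩
  · exact h.forall_ne_finset hu hv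
  · exact (h.forall_ne_finset hv hu).symm

/-- `G` has a set of `k` vertices spanning at most `t` edges. -/
def HasSparseSet (G : SimpleGraph V) (k t : ℕ) : Prop :=
  ∃ I : Finset V, #I = k ∧ (G.edgeSet ∩ pairsIn I).ncard ≤ t

/-- `G` has a vertex partition `A`, `S`, `B` with `0 < #A ≤ #B` and `#S < k` such that at most
`d * #A` edges join `A` to `B`, i.e. `S` fails to be a small separator only by these edges. -/
def HasSparseCut [Fintype V] (G : SimpleGraph V) (k d : ℕ) : Prop :=
  ∃ A S : Finset V, A.Nonempty ∧ Disjoint A S ∧ #S < k ∧ 2 * #A + #S ≤ Fintype.card V ∧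
    (G.edgeSet ∩ pairsBetween A (A ∪ S)ᶜ).ncard ≤ d * #A

theorem HasSparseSet.mono {k t t' : ℕ} (h : HasSparseSet G k t) (ht : t ≤ t') :
    HasSparseSet G k t' :=
  let ⟨I, hI, hIt⟩ := h
  ⟨I, hI, hIt.trans ht⟩

theorem HasSparseCut.mono [Fintype V] {k d d' : ℕ} (h : HasSparseCut G k d) (hd : d ≤ d') :
    HasSparseCut G k d' :=
  let ⟨A, S, hA, hAS, hS, hcard, hd'⟩ := h
  ⟨A, S, hA, hAS, hS, hcard, hd'.trans (Nat.mul_le_mul_right _ hd)⟩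

theorem hasSparseSet_of_deleteEdges {k t : ℕ} {Q : Finset (Sym2 V)}
    (hQ : ∀ I : Finset V, #(pairsIn I ∩ Q) ≤ t * #I)
    (h : ∃ I, (G.deleteEdges Q).IsNIndepSet k I) : HasSparseSet G k (t * k) := by
  obtain ⟨I, hI, rfl⟩ := h
  refine ⟨I, rfl, le_trans ?_ (hQ I)⟩
  rw [← Set.ncard_coe_finset]
  refine Set.ncard_le_ncard ?_ (finite_toSet _)
  rintro ⟨u, v⟩ ⟨he, hI'⟩
  obtain ⟨hu, hv, huv⟩ := mk_mem_pairsIn.1 hI'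
  have := hI hu hv huv
  simp only [SimpleGraph.deleteEdges_adj, mem_coe, not_and, not_not] at this
  exact mem_inter.2 ⟨hI', this he⟩

theorem hasSparseCut_of_deleteEdges [Fintype V] {k d : ℕ} {Q : Finset (Sym2 V)}
    (hQ : ∀ A B : Finset V, #(pairsBetween A B ∩ Q) ≤ d * #A)
    (h : ∃ A S : Finset V, A.Nonempty ∧ (A ∪ S)ᶜ.Nonempty ∧ Disjoint A S ∧ #S < k ∧
      ∀ u ∈ A, ∀ w ∈ (A ∪ S)ᶜ, ¬ (G.deleteEdges Q).Adj u w) : HasSparseCut G k d := by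
  obtain ⟨A, S, hA, hB, hAS, hS, hadj⟩ := h
  wlog hle : #A ≤ #(A ∪ S)ᶜ generalizing A
  · have hA' : ((A ∪ S)ᶜ ∪ S)ᶜ = A := by
      ext x
      have : x ∈ A → x ∉ S := fun h => disjoint_left.1 hAS h
      simp only [mem_compl, mem_union]
      tauto
    exact this _ hB (hA'.symm ▸ hA) (disjoint_compl_left.mono_right subset_union_right)
      (fun u hu w hw huw => hadj w (hA' ▸ hw) u hu huw.symm) (hA'.symm ▸ (not_le.1 hle).le)
  have hcard : #A + #S + #(A ∪ S)ᶜ = Fintype.card V := by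
    rw [← card_union_of_disjoint hAS, card_add_card_compl]
  refine ⟨A, S, hA, hAS, hS, by omega, le_trans ?_ (hQ A (A ∪ S)ᶜ)⟩
  rw [← Set.ncard_coe_finset]
  refine Set.ncard_le_ncard ?_ (finite_toSet _)
  rintro ⟨u, v⟩ ⟨he, hAB⟩
  refine mem_inter.2 ⟨hAB, by_contra fun hQuv => ?_⟩
  have huv : (G.deleteEdges Q).Adj u v := by
    rw [SimpleGraph.deleteEdges_adj]
    exact ⟨he, hQuv⟩
  rcases mk_mem_pairsBetween.1 hAB with ⟨hu, hv⟩ | ⟨hv, hu⟩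
  · exact hadj u hu v hv huv
  · exact hadj v hv u hu huv.symm

theorem card_toFinset_filter_mem_le {α β : Type*} [DecidableEq α] [DecidableEq β] {l : List α}
    {f : α → β} (hl : (l.map f).Nodup) (I : Finset β) : #{a ∈ l.toFinset | f a ∈ I} ≤ #I :=
  card_le_card_of_injOn f (fun _ ha => (mem_filter.1 ha).2) fun _ ha _ ha' =>
    List.inj_on_of_nodup_map hl (List.mem_toFinset.1 (mem_filter.1 ha).1)
      (List.mem_toFinset.1 (mem_filter.1 ha').1)

theorem card_pairsIn_inter_edges_le {a : V} {c : G.Walk a a} (hc : c.IsCycle) (I : Finset V) :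
    #(pairsIn I ∩ c.edges.toFinset) ≤ #I := by
  have hfst : (c.darts.map (·.fst)).Nodup := by
    rw [SimpleGraph.Walk.map_fst_darts]
    exact hc.nodup_dropLast_support
  refine le_trans (card_le_card fun e he => ?_)
    ((card_image_le (f := SimpleGraph.Dart.edge)).trans (card_toFinset_filter_mem_le hfst I))
  simp only [mem_inter, List.mem_toFinset, SimpleGraph.Walk.edges, List.mem_map] at he
  obtain ⟨heI, d, hd, rfl⟩ := he
  exact mem_image_of_mem _ (mem_filter.2 ⟨List.mem_toFinset.2 hd, (mk_mem_pairsIn.1 heI).1⟩)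

theorem card_pairsBetween_inter_edges_le {a : V} {c : G.Walk a a} (hc : c.IsCycle)
    (A B : Finset V) : #(pairsBetween A B ∩ c.edges.toFinset) ≤ 2 * #A := by
  have hfst : (c.darts.map (·.fst)).Nodup := by
    rw [SimpleGraph.Walk.map_fst_darts]
    exact hc.nodup_dropLast_support
  have hsnd : (c.darts.map (·.snd)).Nodup := by
    rw [SimpleGraph.Walk.map_snd_darts]
    exact hc.support_nodup
  have hsub : pairsBetween A B ∩ c.edges.toFinset ⊆
      ({d ∈ c.darts.toFinset | d.fst ∈ A} ∪ {d ∈ c.darts.toFinset | d.snd ∈ A}).image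
        SimpleGraph.Dart.edge := by
    intro e he
    simp only [mem_inter, List.mem_toFinset, SimpleGraph.Walk.edges, List.mem_map] at he
    obtain ⟨heA, d, hd, rfl⟩ := he
    refine mem_image_of_mem _ ?_
    rw [mem_union, mem_filter, mem_filter, List.mem_toFinset]
    exact (mk_mem_pairsBetween.1 heA).imp (fun h => ⟨hd, h.1⟩) fun h => ⟨hd, h.1⟩
  calc #(pairsBetween A B ∩ c.edges.toFinset)
      ≤ #{d ∈ c.darts.toFinset | d.fst ∈ A} + #{d ∈ c.darts.toFinset | d.snd ∈ A} :=
        (card_le_card hsub).trans (card_image_le.trans (card_union_le _ _))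
    _ ≤ #A + #A :=
        add_le_add (card_toFinset_filter_mem_le hfst A) (card_toFinset_filter_mem_le hsnd A)
    _ = 2 * #A := (two_mul _).symm

theorem card_inter_biUnion_edges_le {m b : ℕ} (c : Fin m → Σ a : V, G.Walk a a)
    (T : Finset (Sym2 V)) (hb : ∀ i, #(T ∩ (c i).2.edges.toFinset) ≤ b) :
    #(T ∩ univ.biUnion fun i => (c i).2.edges.toFinset) ≤ m * b := by
  rw [inter_biUnion]
  simpa using card_biUnion_le_card_mul univ _ b fun i _ => hb i

theorem hasEdgeDisjointHamCycles_succ_of_deleteEdges {m : ℕ} {c : Fin m → Σ a : V, G.Walk a a}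
    (hc : ∀ i, (c i).2.IsHamiltonianCycle)
    (hdisj : ∀ i j, i ≠ j → ∀ e ∈ (c i).2.edges, e ∉ (c j).2.edges) {a : V}
    {d : (G.deleteEdges ↑(univ.biUnion fun i => (c i).2.edges.toFinset)).Walk a a}
    (hd : d.IsHamiltonianCycle) : G.HasEdgeDisjointHamCycles (m + 1) := by
  let d' : G.Walk a a := d.map (.ofLE (SimpleGraph.deleteEdges_le _))
  have hd' : ∀ i, ∀ e ∈ d'.edges, e ∉ (c i).2.edges := by
    intro i e he hei
    have := d.edges_subset_edgeSet (by simpa [d'] using he)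
    rw [SimpleGraph.edgeSet_deleteEdges] at this
    exact this.2 (mem_biUnion.2 ⟨i, mem_univ i, List.mem_toFinset.2 hei⟩)
  refine ⟨Fin.cons ⟨a, d'⟩ c, ?_, ?_⟩
  · exact Fin.cases (hd.map (f := SimpleGraph.Hom.ofLE _) Function.bijective_id) hc
  · refine Fin.cases ?_ fun i => ?_ <;> refine Fin.cases ?_ fun j => ?_
    · exact fun h => absurd rfl h
    · exact fun _ e he => hd' j e he
    · exact fun _ e he he' => hd' i e he' he
    · exact fun hij => hdisj i j fun h => hij (congrArg _ h)

theorem hasEdgeDisjointHamCycles_succ_or_sparse [Fintype V] (hV : 3 ≤ Fintype.card V) (k : ℕ)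
    {m : ℕ} (hG : G.HasEdgeDisjointHamCycles m) :
    G.HasEdgeDisjointHamCycles (m + 1) ∨ HasSparseSet G (k + 1) (m * (k + 1)) ∨
      HasSparseCut G k (m * 2) := by
  obtain ⟨c, hc, hdisj⟩ := hG
  by_cases hH : (G.deleteEdges ↑(univ.biUnion fun i => (c i).2.edges.toFinset)).IsHamiltonian
  · obtain ⟨a, d, hd⟩ := hH (by omega)
    exact .inl (hasEdgeDisjointHamCycles_succ_of_deleteEdges hc hdisj hd)
  · refine .inr ((exists_isNIndepSet_or_separator hV hH k).imp
      (hasSparseSet_of_deleteEdges fun I => ?_) (hasSparseCut_of_deleteEdges fun A B => ?_))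
    · exact card_inter_biUnion_edges_le c _ fun i => card_pairsIn_inter_edges_le (hc i).isCycle I
    · rw [mul_assoc]
      exact card_inter_biUnion_edges_le c _ fun i =>
        card_pairsBetween_inter_edges_le (hc i).isCycle A B

theorem hasSparseSet_or_hasSparseCut [Fintype V] (hV : 3 ≤ Fintype.card V) (k : ℕ) {m : ℕ}
    (hG : ¬ G.HasEdgeDisjointHamCycles (m + 1)) :
    HasSparseSet G (k + 1) (m * (k + 1)) ∨ HasSparseCut G k (m * 2) := by
  induction m with
  | zero =>
    have h0 : G.HasEdgeDisjointHamCycles 0 := ⟨Fin.elim0, fun i => i.elim0, fun i => i.elim0⟩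
    exact (hasEdgeDisjointHamCycles_succ_or_sparse hV k h0).resolve_left hG
  | succ m ih =>
    by_cases hm : G.HasEdgeDisjointHamCycles (m + 1)
    · exact (hasEdgeDisjointHamCycles_succ_or_sparse hV k hm).resolve_left hG
    · exact (ih hm).imp (·.mono (Nat.mul_le_mul_right _ m.le_succ))
        (·.mono (Nat.mul_le_mul_right _ m.le_succ))

theorem not_hasEdgeDisjointHamCycles_of_forall_not_adj {v : V}
    (hv : ∀ w, ¬ G.Adj v w) {r : ℕ} (hr : 1 ≤ r) : ¬ G.HasEdgeDisjointHamCycles r := by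
  rintro ⟨c, hc, -⟩
  have hcyc := hc ⟨0, hr⟩
  exact hv _ (SimpleGraph.Walk.adj_snd (hcyc.rotate (hcyc.mem_support v)).not_nil)

end SparseStructures

section BinomialRandomGraph

open Finset MeasureTheory ProbabilityTheory SimpleGraph

theorem measureReal_le_card_mul {α β : Type*} [MeasurableSpace α] {μ : Measure α}
    [IsFiniteMeasure μ] {s : Finset β} {S : Set α} {f : β → Set α} {b : ℝ}
    (hS : S ⊆ ⋃ i ∈ s, f i) (hf : ∀ i ∈ s, μ.real (f i) ≤ b) : μ.real S ≤ #s * b := by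
  rw [← nsmul_eq_mul]
  exact (measureReal_mono hS (measure_ne_top μ _)).trans
    ((measureReal_biUnion_finset_le s f).trans (sum_le_card_nsmul s _ b hf))

theorem card_powerset_filter_card_le {α : Type*} (T : Finset α) (t : ℕ) :
    #{F ∈ T.powerset | #F ≤ t} ≤ (#T + 1) ^ t := by
  classical
  induction t with
  | zero =>
    refine (card_le_card (t := {∅}) fun F hF => ?_).trans (by simp)
    simp only [mem_filter, Nat.le_zero, card_eq_zero] at hF
    simp [hF.2]
  | succ t ih =>
    have hsub : {F ∈ T.powerset | #F ≤ t + 1} ⊆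
        ({F ∈ T.powerset | #F ≤ t} ×ˢ insertNone T).image
          fun x => x.2.elim x.1 fun a => insert a x.1 := by
      intro F hF
      simp only [mem_filter, mem_powerset] at hF
      rw [mem_image]
      rcases F.eq_empty_or_nonempty with rfl | ⟨a, ha⟩
      · exact ⟨(∅, none), by simp, rfl⟩
      · refine ⟨(F.erase a, some a), ?_, by simp [insert_erase ha]⟩
        simp only [mem_product, mem_filter, mem_powerset, some_mem_insertNone]
        exact ⟨⟨(erase_subset _ _).trans hF.1, by rw [card_erase_of_mem ha]; omega⟩, hF.1 ha⟩
    refine (card_le_card hsub).trans (card_image_le.trans ?_)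
    rw [card_product, card_insertNone, pow_succ]
    exact Nat.mul_le_mul_right _ ih

theorem card_filter_le_pow {α : Type*} [Fintype α] {P : Finset α → Prop} [DecidablePred P] {k : ℕ}
    (hP : ∀ A, P A → #A ≤ k) : #{A | P A} ≤ (Fintype.card α + 1) ^ k := by
  refine (card_le_card fun A hA => ?_).trans (card_powerset_filter_card_le (univ : Finset α) k)
  simpa using hP A (by simpa using hA)

theorem erProb_eq_binomialRandom_real {n : ℕ} (p : unitInterval) (A : SimpleGraph (Fin n) → Prop) :
    erProb n p A = G(Fin n, p).real {G | A G} := by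
  classical
  have : MeasurableSingletonClass (SimpleGraph (Fin n)) := ⟨fun G => by
    rw [← edgeSet_injective.preimage_image {G}, Set.image_singleton]
    exact measurable_edgeSet (measurableSet_singleton _)⟩
  have hsingle : ∀ G : SimpleGraph (Fin n), G(Fin n, p).real {G} =
      p ^ G.edgeSet.ncard * (1 - p : ℝ) ^ (n.choose 2 - G.edgeSet.ncard) := by
    intro G
    simp [measureReal_def]
  rw [erProb, ← sum_filter, ← coe_filter_univ, ← sum_measureReal_singleton]
  exact sum_congr rfl fun G _ => (hsingle G).symm

variable {V : Type*} {p : unitInterval}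

theorem binomialRandom_real_disjoint_edgeSet [Countable V] {T : Finset (Sym2 V)}
    (hT : (T : Set (Sym2 V)) ⊆ Sym2.diagSetᶜ) :
    G(V, p).real {G | Disjoint G.edgeSet T} = (1 - p : ℝ) ^ #T := by
  have hpre : fromEdgeSet ⁻¹' {G : SimpleGraph V | Disjoint G.edgeSet T} =
      {s : Set (Sym2 V) | Disjoint s T} := by
    ext s
    rw [Set.mem_preimage, Set.mem_ofPred_eq, Set.mem_ofPred_eq, edgeSet_fromEdgeSet,
      Set.disjoint_left, Set.disjoint_left]
    exact ⟨fun h e he heT => h ⟨he, hT heT⟩ heT, fun h e he => h he.1⟩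
  have hpre' : (fun q : Sym2 V → Prop => {e | q e}) ⁻¹' {s | Disjoint s (T : Set (Sym2 V))} =
      Set.pi T fun _ => {False} := by
    ext q
    simp only [Set.mem_preimage, Set.mem_ofPred_eq, Set.disjoint_right, Set.mem_pi,
      Set.mem_singleton_iff, eq_iff_iff, iff_false]
  have hmeas : MeasurableSet {G : SimpleGraph V | Disjoint G.edgeSet T} := by
    simp only [Set.disjoint_right]
    measurability
  rw [binomialRandom_eq_map, map_measureReal_apply measurable_fromEdgeSet hmeas, hpre,
    measureReal_def, setBernoulli_apply', hpre', Measure.infinitePi_pi _ fun _ _ => .singleton _,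
    ENNReal.toReal_prod, ← prod_const]
  refine prod_congr rfl fun e he => ?_
  have hdiag := hT he
  simp [hdiag]

theorem binomialRandom_real_ncard_inter_le [Countable V] {T : Finset (Sym2 V)}
    (hT : (T : Set (Sym2 V)) ⊆ Sym2.diagSetᶜ) (t : ℕ) :
    G(V, p).real {G | (G.edgeSet ∩ T).ncard ≤ t} ≤ (#T + 1 : ℝ) ^ t * (1 - p : ℝ) ^ (#T - t) := by
  classical
  have hp : 0 ≤ (1 - p : ℝ) := sub_nonneg.2 p.2.2
  have hsub : {G : SimpleGraph V | (G.edgeSet ∩ T).ncard ≤ t} ⊆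
      ⋃ F ∈ {F ∈ T.powerset | #F ≤ t}, {G | Disjoint G.edgeSet ↑(T \ F)} := by
    intro G hG
    have hcoe : (↑(T.filter (· ∈ G.edgeSet)) : Set (Sym2 V)) = G.edgeSet ∩ T := by
      rw [coe_filter, Set.inter_comm]
      rfl
    refine Set.mem_biUnion (x := T.filter (· ∈ G.edgeSet)) ?_
      (Set.disjoint_left.2 fun e he heT => ?_)
    · rw [mem_coe, mem_filter, mem_powerset, ← Set.ncard_coe_finset, hcoe]
      exact ⟨filter_subset _ _, hG⟩
    · rw [coe_sdiff, hcoe] at heT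
      exact heT.2 ⟨he, heT.1⟩
  refine (measureReal_le_card_mul (b := (1 - p : ℝ) ^ (#T - t)) hsub fun F hF => ?_).trans ?_
  · simp only [mem_filter, mem_powerset] at hF
    rw [binomialRandom_real_disjoint_edgeSet
      ((coe_subset.2 sdiff_subset).trans hT), card_sdiff_of_subset hF.1]
    exact pow_le_pow_of_le_one hp (sub_le_self _ p.2.1) (by omega)
  · gcongr
    exact_mod_cast card_powerset_filter_card_le T t

variable [Fintype V] [DecidableEq V]

theorem binomialRandom_real_hasSparseSet_le (p : unitInterval) (k t : ℕ) :
    G(V, p).real {G | HasSparseSet G k t} ≤ (Fintype.card V + 1 : ℝ) ^ k *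
      ((k.choose 2 + 1 : ℝ) ^ t * (1 - p : ℝ) ^ (k.choose 2 - t)) := by
  have hp : 0 ≤ (1 - p : ℝ) := sub_nonneg.2 p.2.2
  have hsub : {G : SimpleGraph V | HasSparseSet G k t} ⊆
      ⋃ I ∈ (univ : Finset (Finset V)).filter (#· = k),
        {G | (G.edgeSet ∩ pairsIn I).ncard ≤ t} := by
    rintro G ⟨I, hI, hIt⟩
    exact Set.mem_biUnion (mem_filter_univ I |>.2 hI) hIt
  refine (measureReal_le_card_mul hsub fun I hI => ?_).trans
    (mul_le_mul_of_nonneg_right (b := (#{I : Finset V | #I = k} : ℝ)) ?_ (by positivity))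
  · rw [← (mem_filter.1 hI).2, ← card_pairsIn]
    exact binomialRandom_real_ncard_inter_le (pairsIn_subset_compl_diagSet I) t
  · exact_mod_cast card_filter_le_pow fun A (hA : #A = k) => hA.le

theorem binomialRandom_real_ncard_cut_le {A S : Finset V} (hAS : Disjoint A S) {k : ℕ}
    (hS : #S ≤ k) (d : ℕ) :
    G(V, p).real {G | (G.edgeSet ∩ pairsBetween A (A ∪ S)ᶜ).ncard ≤ d * #A} ≤
      (Fintype.card V + 1 : ℝ) ^ (2 * (d * #A)) *
        (1 - p : ℝ) ^ (#A * (Fintype.card V - #A - k - d)) := by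
  have hp : 0 ≤ (1 - p : ℝ) := sub_nonneg.2 p.2.2
  have hAB : Disjoint A (A ∪ S)ᶜ := disjoint_compl_right.mono_left subset_union_left
  refine (binomialRandom_real_ncard_inter_le (pairsBetween_subset_compl_diagSet hAB) _).trans ?_
  rw [pow_mul (_ + 1 : ℝ) 2]
  refine mul_le_mul (pow_le_pow_left₀ (by positivity) ?_ _) ?_ (by positivity) (by positivity)
  · exact_mod_cast card_pairsBetween_succ_le hAB
  · refine pow_le_pow_of_le_one hp (sub_le_self _ p.2.1) ?_
    rw [card_pairsBetween hAB, card_compl, card_union_of_disjoint hAS, mul_comm d, ← Nat.mul_sub]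
    exact Nat.mul_le_mul_left _ (by omega)

theorem binomialRandom_real_exists_cut_le (a k d : ℕ) :
    G(V, p).real {G | ∃ A S : Finset V, #A = a ∧ Disjoint A S ∧ #S ≤ k ∧
      (G.edgeSet ∩ pairsBetween A (A ∪ S)ᶜ).ncard ≤ d * #A} ≤
      (Fintype.card V + 1 : ℝ) ^ (a + k + 2 * (d * a)) *
        (1 - p : ℝ) ^ (a * (Fintype.card V - a - k - d)) := by
  have hp : 0 ≤ (1 - p : ℝ) := sub_nonneg.2 p.2.2
  let pairs : Finset (Finset V × Finset V) :=
    {x ∈ ({A | #A = a} : Finset (Finset V)) ×ˢ ({S | #S ≤ k} : Finset (Finset V)) |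
      Disjoint x.1 x.2}
  have hpairs : #pairs ≤ (Fintype.card V + 1) ^ (a + k) := by
    refine (card_filter_le _ _).trans ?_
    rw [card_product, pow_add]
    exact Nat.mul_le_mul (card_filter_le_pow fun A (hA : #A = a) => hA.le)
      (card_filter_le_pow fun _ => id)
  rw [pow_add, mul_assoc]
  refine (measureReal_le_card_mul (s := pairs) (f := fun x =>
    {G | (G.edgeSet ∩ ↑(pairsBetween x.1 (x.1 ∪ x.2)ᶜ)).ncard ≤ d * #x.1}) ?_ ?_).trans
    (mul_le_mul_of_nonneg_right (b := (#pairs : ℝ)) (by exact_mod_cast hpairs) (by positivity))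
  · rintro G ⟨A, S, hA, hAS, hS, hd⟩
    exact Set.mem_biUnion (x := (A, S)) (by simp [pairs, hA, hAS, hS]) hd
  · rintro ⟨A, S⟩ hx
    simp only [pairs, mem_filter, mem_product, mem_univ, true_and] at hx
    obtain ⟨⟨rfl, hS⟩, hAS⟩ := hx
    exact binomialRandom_real_ncard_cut_le hAS hS d

theorem binomialRandom_real_hasSparseCut_le (p : unitInterval) (k d : ℕ) :
    G(V, p).real {G | HasSparseCut G k d} ≤ ∑ a ∈ Icc 1 (Fintype.card V / 2),
      (Fintype.card V + 1 : ℝ) ^ (a + k + 2 * (d * a)) *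
        (1 - p : ℝ) ^ (a * (Fintype.card V - a - k - d)) := by
  refine (measureReal_mono (s₂ := ⋃ a ∈ Icc 1 (Fintype.card V / 2),
    {G : SimpleGraph V | ∃ A S : Finset V, #A = a ∧ Disjoint A S ∧ #S ≤ k ∧
      (G.edgeSet ∩ pairsBetween A (A ∪ S)ᶜ).ncard ≤ d * #A}) ?_
    (measure_ne_top _ _)).trans ((measureReal_biUnion_finset_le _ _).trans
      (sum_le_sum fun a _ => binomialRandom_real_exists_cut_le a k d))
  rintro G ⟨A, S, hA, hAS, hS, hcard, hd⟩
  have := hA.card_pos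
  exact Set.mem_biUnion (x := #A) (mem_coe.2 (mem_Icc.2 ⟨this, by omega⟩))
    ⟨A, S, rfl, hAS, hS.le, hd⟩

theorem binomialRandom_real_not_hasEdgeDisjointHamCycles_le (hV : 3 ≤ Fintype.card V)
    (p : unitInterval) (k m : ℕ) :
    G(V, p).real {G | ¬ G.HasEdgeDisjointHamCycles (m + 1)} ≤
      (Fintype.card V + 1 : ℝ) ^ (k + 1) * (((k + 1).choose 2 + 1 : ℝ) ^ (m * (k + 1)) *
        (1 - p : ℝ) ^ ((k + 1).choose 2 - m * (k + 1))) +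
      ∑ a ∈ Icc 1 (Fintype.card V / 2), (Fintype.card V + 1 : ℝ) ^ (a + k + 2 * (m * 2 * a)) *
        (1 - p : ℝ) ^ (a * (Fintype.card V - a - k - m * 2)) :=
  (measureReal_mono (fun _ hG => hasSparseSet_or_hasSparseCut hV k hG) (measure_ne_top _ _)).trans
    ((measureReal_union_le _ _).trans (add_le_add (binomialRandom_real_hasSparseSet_le p _ _)
      (binomialRandom_real_hasSparseCut_le p _ _)))

theorem pow_le_binomialRandom_real_not_hasEdgeDisjointHamCycles [Nonempty V] (p : unitInterval)
    {r : ℕ} (hr : 1 ≤ r) : (1 - p : ℝ) ^ (Fintype.card V - 1) ≤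
      G(V, p).real {G | ¬ G.HasEdgeDisjointHamCycles r} := by
  let v : V := Classical.arbitrary V
  have hdisj : Disjoint {v} ({v}ᶜ : Finset V) := disjoint_compl_right
  have h := binomialRandom_real_disjoint_edgeSet (p := p) (pairsBetween_subset_compl_diagSet hdisj)
  rw [card_pairsBetween hdisj, card_compl, card_singleton, one_mul] at h
  refine h.symm.trans_le (measureReal_mono (fun G hG =>
    not_hasEdgeDisjointHamCycles_of_forall_not_adj (v := v) (fun w hvw => ?_) hr)
    (measure_ne_top _ _))
  exact Set.disjoint_left.1 hG hvw
    (mk_mem_pairsBetween.2 (.inl ⟨mem_singleton_self v, by simpa using hvw.ne'⟩))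

end BinomialRandomGraph

section Estimates

open Filter Finset Real SimpleGraph
open scoped ProbabilityTheory Topology

/-- Among the cuts with smaller side `a ≤ n / 2`, the bound for `a = 1` dominates. -/
theorem cut_exponent_le {a n k m lam L : ℝ} (ha : 1 ≤ a) (han : a ≤ n / 2) (hL : 0 ≤ L)
    (hcut : lam * (1 + 4 * m) ≤ L * (n / 2 - 1 - k - 2 * m)) :
    lam * (a + k + 4 * m * a) - L * (a * (n - a - k - 2 * m)) ≤
      lam * (1 + k + 4 * m) - L * (n - 1 - k - 2 * m) := by
  have hdiff : (lam * (a + k + 4 * m * a) - L * (a * (n - a - k - 2 * m))) -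
      (lam * (1 + k + 4 * m) - L * (n - 1 - k - 2 * m)) =
      (a - 1) * (lam * (1 + 4 * m) - L * (n - a - 1 - k - 2 * m)) := by ring
  have hstep : L * (n / 2 - 1 - k - 2 * m) ≤ L * (n - a - 1 - k - 2 * m) := by
    gcongr
    linarith
  have := mul_nonpos_of_nonneg_of_nonpos (sub_nonneg.2 ha) (sub_nonpos.2 (hcut.trans hstep))
  linarith [hdiff, this]

theorem pow_le_exp_mul {x lam : ℝ} (hx : 0 ≤ x) (h : x ≤ exp lam) (j : ℕ) :
    x ^ j ≤ exp (lam * j) := by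
  rw [mul_comm, exp_nat_mul]
  exact pow_le_pow_left₀ hx h j

theorem sparse_set_term_le {n C k m : ℕ} {x lam : ℝ} (hx0 : 0 ≤ x) (hx1 : x ≤ 1)
    (hn : (n + 1 : ℝ) ≤ exp lam) (hC : (C + 1 : ℝ) ≤ exp lam) (hset : n + m * (k + 1) ≤ C) :
    (n + 1 : ℝ) ^ (k + 1) * ((C + 1 : ℝ) ^ (m * (k + 1)) * x ^ (C - m * (k + 1))) ≤
      x ^ n * exp (lam * ((k + 1) * (m + 1))) := by
  calc (n + 1 : ℝ) ^ (k + 1) * ((C + 1 : ℝ) ^ (m * (k + 1)) * x ^ (C - m * (k + 1)))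
      ≤ exp (lam * (k + 1 : ℕ)) * (exp (lam * (m * (k + 1) : ℕ)) * x ^ n) := by
        gcongr ?_ * (?_ * ?_)
        · exact pow_le_exp_mul (by positivity) hn _
        · exact pow_le_exp_mul (by positivity) hC _
        · exact pow_le_pow_of_le_one hx0 hx1 (by omega)
    _ = x ^ n * exp (lam * ((k + 1) * (m + 1))) := by
        rw [← mul_assoc, ← exp_add, mul_comm]
        push_cast
        ring_nf

theorem sparse_cut_term_le {a n k m : ℕ} {lam L : ℝ} (ha : a ∈ Icc 1 (n / 2)) (hk : 3 ≤ k)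
    (hL : 0 ≤ L) (hn : (n + 1 : ℝ) ≤ exp lam)
    (hcut : lam * (1 + 4 * m) ≤ L * ((n : ℝ) / 2 - 1 - k - 2 * m)) :
    (n + 1 : ℝ) ^ (a + k + 2 * (m * 2 * a)) * exp (-L) ^ (a * (n - a - k - m * 2)) ≤
      exp (-L) ^ n * exp ((lam + L) * ((k + 1) * (m + 1))) := by
  obtain ⟨ha1, han⟩ := mem_Icc.1 ha
  have hlam : 0 ≤ lam := exp_le_exp.1 <| by
    rw [exp_zero]
    exact le_trans (by simp) hn
  have ha1' : (1 : ℝ) ≤ a := by exact_mod_cast ha1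
  have han' : (a : ℝ) ≤ n / 2 := (Nat.cast_le.2 han).trans Nat.cast_div_le
  have hsub : (a * ((n : ℝ) - a - k - 2 * m) : ℝ) ≤ (a * (n - a - k - m * 2) : ℕ) := by
    have : (n : ℝ) ≤ (n - a - k - m * 2 : ℕ) + (a + k + m * 2) := by
      exact_mod_cast (by omega : n ≤ (n - a - k - m * 2) + (a + k + m * 2))
    push_cast
    gcongr
    linarith
  have hkm : (1 + k + 4 * m : ℝ) ≤ (k + 1) * (m + 1) := by
    have : (3 : ℝ) ≤ k := by exact_mod_cast hk
    nlinarith [mul_le_mul_of_nonneg_right this (Nat.cast_nonneg (α := ℝ) m)]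
  calc (n + 1 : ℝ) ^ (a + k + 2 * (m * 2 * a)) * exp (-L) ^ (a * (n - a - k - m * 2))
      ≤ exp (lam * (a + k + 2 * (m * 2 * a) : ℕ)) *
          exp (-L * (a * (n - a - k - m * 2) : ℕ)) :=
        mul_le_mul (pow_le_exp_mul (by positivity) hn _) (pow_le_exp_mul (exp_nonneg _) le_rfl _)
          (by positivity) (by positivity)
    _ ≤ exp (lam * (a + k + 4 * m * a) - L * (a * (n - a - k - 2 * m))) := by
        rw [← exp_add, exp_le_exp]
        have := mul_le_mul_of_nonneg_left hsub hL
        push_cast at this ⊢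
        linarith
    _ ≤ exp (lam * (1 + k + 4 * m) - L * (n - 1 - k - 2 * m)) :=
        exp_le_exp.2 (cut_exponent_le ha1' han' hL hcut)
    _ ≤ exp (-L * n + (lam + L) * ((k + 1) * (m + 1))) := by
        have h1 := mul_le_mul_of_nonneg_left hkm hlam
        have h2 : L * (1 + k + 2 * m) ≤ L * ((k + 1) * (m + 1)) := by
          gcongr
          linarith [Nat.cast_nonneg (α := ℝ) m]
        rw [exp_le_exp]
        linarith
    _ = exp (-L) ^ n * exp ((lam + L) * ((k + 1) * (m + 1))) := by
        rw [exp_add, mul_comm (-L), exp_nat_mul]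

theorem binomialRandom_real_not_hasEdgeDisjointHamCycles_le_exp {V : Type*} [Fintype V]
    [DecidableEq V] (hV : 3 ≤ Fintype.card V) {p : unitInterval} {k m : ℕ} {lam L : ℝ}
    (hk : 3 ≤ k) (hL : 0 ≤ L) (hp : (1 - p : ℝ) = exp (-L))
    (hn : (Fintype.card V + 1 : ℝ) ≤ exp lam) (hC : ((k + 1).choose 2 + 1 : ℝ) ≤ exp lam)
    (hset : Fintype.card V + m * (k + 1) ≤ (k + 1).choose 2)
    (hcut : lam * (1 + 4 * m) ≤ L * ((Fintype.card V : ℝ) / 2 - 1 - k - 2 * m)) :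
    G(V, p).real {G | ¬ G.HasEdgeDisjointHamCycles (m + 1)} ≤
      (1 - p : ℝ) ^ Fintype.card V * exp (lam + (lam + L) * ((k + 1) * (m + 1))) := by
  set n := Fintype.card V
  have hp0 : 0 ≤ (1 - p : ℝ) := sub_nonneg.2 p.2.2
  set B : ℝ := (1 - p) ^ n * exp ((lam + L) * ((k + 1) * (m + 1)))
  have hB : 0 ≤ B := mul_nonneg (pow_nonneg hp0 _) (exp_nonneg _)
  have hterm : ∀ a ∈ Icc 1 (n / 2), (n + 1 : ℝ) ^ (a + k + 2 * (m * 2 * a)) *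
      (1 - p : ℝ) ^ (a * (n - a - k - m * 2)) ≤ B := by
    simp only [B, hp]
    exact fun a ha => sparse_cut_term_le ha hk hL hn hcut
  have hB' : (1 - p : ℝ) ^ n * exp (lam * ((k + 1) * (m + 1))) ≤ B := by
    refine mul_le_mul_of_nonneg_left (exp_le_exp.2 ?_) (pow_nonneg hp0 _)
    gcongr
    linarith
  calc G(V, p).real {G | ¬ G.HasEdgeDisjointHamCycles (m + 1)}
      ≤ B + #(Icc 1 (n / 2)) • B :=
        (binomialRandom_real_not_hasEdgeDisjointHamCycles_le hV p k m).trans <| add_le_add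
          ((sparse_set_term_le hp0 (sub_le_self _ p.2.1) hn hC hset).trans hB')
          (sum_le_card_nsmul _ _ _ hterm)
    _ = (1 + (n / 2 : ℕ)) * B := by
        rw [nsmul_eq_mul, Nat.card_Icc, Nat.add_sub_cancel, one_add_mul]
    _ ≤ exp lam * B := by
        refine mul_le_mul_of_nonneg_right (le_trans ?_ hn) hB
        rw [add_comm]
        gcongr
        exact Nat.div_le_self n 2
    _ = (1 - p) ^ n * exp (lam + (lam + L) * ((k + 1) * (m + 1))) := by
        rw [exp_add, mul_left_comm]

theorem add_mul_succ_le_choose_two {n k m : ℕ} {θ : ℝ} (hθ : 0 < θ) (hk : θ * √n ≤ k)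
    (hm : (m : ℝ) ≤ (θ ^ 2 - 2) / (2 * θ) * √n) : n + m * (k + 1) ≤ (k + 1).choose 2 := by
  have hfactor : √n / θ ≤ k / 2 - m := by
    have : (θ ^ 2 - 2) / (2 * θ) * √n = θ * √n / 2 - √n / θ := by
      field_simp
    linarith
  have : (n + m * (k + 1) : ℝ) ≤ (k + 1 : ℕ) * ((k + 1 : ℕ) - 1) / 2 := by
    calc (n + m * (k + 1) : ℝ) = θ * √n * (√n / θ) + m * (k + 1) := by
          field_simp
          rw [sq_sqrt n.cast_nonneg]
      _ ≤ (k + 1) * (k / 2 - m) + m * (k + 1) := by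
          gcongr
          linarith
      _ = (k + 1 : ℕ) * ((k + 1 : ℕ) - 1) / 2 := by
          push_cast
          ring
  rw [← Nat.cast_choose_two] at this
  exact_mod_cast this

theorem choose_two_succ_le {n k : ℕ} (hk1 : 1 ≤ k) (hk : (k + 1 : ℝ) ≤ 2 * √n) :
    ((k + 1).choose 2 + 1 : ℝ) ≤ 2 * n := by
  have hk1' : (1 : ℝ) ≤ k := by exact_mod_cast hk1
  have hsq : (k + 1 : ℝ) ^ 2 ≤ (2 * √n) ^ 2 := by gcongr
  rw [mul_pow, sq_sqrt n.cast_nonneg] at hsq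
  rw [Nat.cast_choose_two]
  push_cast
  linarith

theorem mul_one_add_le_mul_half_sub {s n k m lam L u : ℝ} (hs : 16 ≤ s) (hsn : s ^ 2 = n)
    (hk : k + 1 ≤ 2 * s) (hm0 : 0 ≤ m) (hm : m ≤ s) (hL : 0 ≤ L) (hlam0 : 0 ≤ lam)
    (hlam : 16 * lam ≤ u) (hu : u * (m + 1) ≤ L * n) :
    lam * (1 + 4 * m) ≤ L * (n / 2 - 1 - k - 2 * m) :=
  calc lam * (1 + 4 * m) ≤ 16 * lam * (m + 1) / 4 := by linarith
    _ ≤ u * (m + 1) / 4 := by gcongr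
    _ ≤ L * (n / 4) := by linarith
    _ ≤ L * (n / 2 - 1 - k - 2 * m) := by
        gcongr
        nlinarith

theorem le_mul_sqrt_of_mul_le_mul {n m : ℕ} {δ c L : ℝ} (hu : 0 < c * √n * log n)
    (hL : L ≤ δ * (c * log n)) (h : c * √n * log n * (m + 1) ≤ L * n) : (m + 1 : ℝ) ≤ δ * √n := by
  refine le_of_mul_le_mul_left ?_ hu
  calc c * √n * log n * (m + 1) ≤ L * n := h
    _ ≤ δ * (c * log n) * n := by gcongr
    _ = c * √n * log n * (δ * √n) := by
        linear_combination -(δ * (c * log n)) * sq_sqrt n.cast_nonneg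

theorem add_mul_succ_mul_succ_le {k m lam L Λ u : ℝ} (hm : 0 ≤ m) (hk : 0 ≤ k) (hlam : 0 ≤ lam)
    (hLΛ : L ≤ Λ) (hΛ : 0 ≤ Λ) (hu : (k + 2) * (lam + Λ) ≤ u) :
    lam + (lam + L) * ((k + 1) * (m + 1)) ≤ u * (m + 1) :=
  calc lam + (lam + L) * ((k + 1) * (m + 1))
      ≤ (lam + Λ) * (m + 1) + (lam + Λ) * ((k + 1) * (m + 1)) := by
        gcongr
        nlinarith
    _ = (k + 2) * (lam + Λ) * (m + 1) := by ring
    _ ≤ u * (m + 1) := by gcongr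

theorem binomialRandom_real_not_hasEdgeDisjointHamCycles_le_exp_sqrt {V : Type*} [Fintype V]
    [DecidableEq V] {p : unitInterval} {m : ℕ} {θ c L Λ : ℝ} (hθ1 : 1 ≤ θ) (hθ2 : θ ≤ 2)
    (hc : 0 < c) (hp : (1 - p : ℝ) = exp (-L)) (hL : 0 ≤ L) (hLΛ : L ≤ Λ)
    (hV : 16 ≤ √(Fintype.card V))
    (hk : (⌈θ * √(Fintype.card V)⌉₊ + 1 : ℝ) ≤ 2 * √(Fintype.card V))
    (hΛ : Λ ≤ (θ ^ 2 - 2) / (2 * θ) * (c * log (Fintype.card V)))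
    (hlog : (⌈θ * √(Fintype.card V)⌉₊ + 2) * (log (2 * Fintype.card V) + Λ) ≤
      c * √(Fintype.card V) * log (Fintype.card V)) :
    G(V, p).real {G | ¬ G.HasEdgeDisjointHamCycles (m + 1)} ≤
      (1 - p : ℝ) ^ Fintype.card V *
        exp (c * (m + 1) * √(Fintype.card V) * log (Fintype.card V)) := by
  set n := Fintype.card V
  set k := ⌈θ * √n⌉₊
  set lam := log (2 * n)
  have hsq : √n ^ 2 = (n : ℝ) := sq_sqrt n.cast_nonneg
  have hn : (256 : ℝ) ≤ n := by nlinarith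
  have hkθ : θ * √n ≤ k := Nat.le_ceil _
  have hk16 : (16 : ℝ) ≤ k := by nlinarith
  have hu : 0 < c * √n * log n := mul_pos (mul_pos hc (by linarith)) (log_pos (by linarith))
  have hlam0 : 0 ≤ lam := log_nonneg (by linarith)
  have hexp : exp lam = 2 * n := exp_log (by linarith)
  -- In the first case the claimed bound is at least `1`; the second forces `m = O(√n)`.
  rcases le_or_gt (L * n) (c * √n * log n * (m + 1)) with htriv | hmain
  · rw [hp, ← exp_nat_mul, ← exp_add]
    exact MeasureTheory.measureReal_le_one.trans (one_le_exp (by linarith))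
  have hm := le_mul_sqrt_of_mul_le_mul hu (hLΛ.trans hΛ) hmain.le
  have hδ : (θ ^ 2 - 2) / (2 * θ) ≤ 1 := by
    rw [div_le_one (by linarith)]
    nlinarith
  refine (binomialRandom_real_not_hasEdgeDisjointHamCycles_le_exp (k := k) (lam := lam) ?_ ?_ hL hp
    (by linarith) ?_ ?_ ?_).trans ?_
  · exact_mod_cast (by linarith : (3 : ℝ) ≤ n)
  · exact_mod_cast (by linarith : (3 : ℝ) ≤ k)
  · exact hexp ▸ choose_two_succ_le (by exact_mod_cast (by linarith : (1 : ℝ) ≤ k)) hk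
  · exact add_mul_succ_le_choose_two (by linarith) hkθ (by linarith)
  · refine mul_one_add_le_mul_half_sub hV hsq hk m.cast_nonneg ?_ hL hlam0 ?_ hmain.le
    · nlinarith
    · nlinarith
  · refine mul_le_mul_of_nonneg_left (exp_le_exp.2 ?_) (pow_nonneg (sub_nonneg.2 p.2.2) _)
    calc lam + (lam + L) * ((k + 1) * (m + 1)) ≤ c * √n * log n * (m + 1) :=
          add_mul_succ_mul_succ_le m.cast_nonneg k.cast_nonneg hlam0 hLΛ (hL.trans hLΛ) hlog
      _ = c * (m + 1) * √n * log n := by ring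

theorem exists_eventually_ceil_mul_sqrt_bounds {c : ℝ} (hc : √2 < c) (Λ : ℝ) :
    ∃ θ : ℝ, 1 ≤ θ ∧ θ ≤ 2 ∧ ∀ᶠ n : ℕ in atTop, 16 ≤ √n ∧ (⌈θ * √n⌉₊ + 1 : ℝ) ≤ 2 * √n ∧
      Λ ≤ (θ ^ 2 - 2) / (2 * θ) * (c * log n) ∧
      (⌈θ * √n⌉₊ + 2) * (log (2 * n) + Λ) ≤ c * √n * log n := by
  have h2 : √2 < 2 := by linarith [sqrt_two_lt_three_halves]
  obtain ⟨θ, hθ, hθmin⟩ := exists_between (lt_min hc h2)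
  obtain ⟨hθc, hθ2⟩ := lt_min_iff.1 hθmin
  have hθ1 : 1 ≤ θ := by
    refine le_trans ?_ hθ.le
    rw [one_le_sqrt]
    norm_num
  have hδ : 0 < (θ ^ 2 - 2) / (2 * θ) := by
    have := (sqrt_lt' (by linarith)).1 hθ
    exact div_pos (by linarith) (by linarith)
  have hsqrt : Tendsto (fun n : ℕ => √n) atTop atTop :=
    tendsto_sqrt_atTop.comp tendsto_natCast_atTop_atTop
  have hlog : Tendsto (fun n : ℕ => log n) atTop atTop :=
    tendsto_log_atTop.comp tendsto_natCast_atTop_atTop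
  have hceil : ∀ b : ℝ, Tendsto (fun n : ℕ => (⌈θ * √n⌉₊ + b) / √n) atTop (𝓝 θ) := by
    intro b
    have h := ((tendsto_nat_ceil_mul_div_atTop (by linarith : 0 ≤ θ)).comp hsqrt).add
      (hsqrt.const_div_atTop b)
    simpa only [Function.comp_apply, add_zero, ← add_div] using h
  have hratio : Tendsto (fun n : ℕ => (log (2 * n) + Λ) / log n) atTop (𝓝 1) := by
    have h := (hlog.const_div_atTop (log 2 + Λ)).const_add 1
    rw [add_zero] at h
    refine h.congr' ?_
    filter_upwards [hlog.eventually_gt_atTop 0, eventually_gt_atTop 0] with n hl hn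
    rw [log_mul two_ne_zero (Nat.cast_ne_zero.2 hn.ne')]
    field_simp
    ring
  refine ⟨θ, hθ1, hθ2.le, ?_⟩
  filter_upwards [hsqrt.eventually_ge_atTop 16, (hceil 1).eventually_le_const hθ2,
    hlog.eventually_gt_atTop 0,
    (hlog.const_mul_atTop (show 0 < c by linarith)).const_mul_atTop hδ |>.eventually_ge_atTop Λ,
    ((hceil 2).mul hratio).eventually_le_const (by simpa using hθc)] with n hs hk hl hΛ hkl
  have hs0 : 0 < √(n : ℝ) := by linarith
  refine ⟨hs, (div_le_iff₀ hs0).1 hk, hΛ, ?_⟩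
  rwa [div_mul_div_comm, div_le_iff₀ (by positivity), ← mul_assoc] at hkl

end Estimates

theorem random_edge_disjoint_ham_cycles_failure_probability_general :
    (∀ n ≥ 1, ∀ p : ℝ, 0 ≤ p → p ≤ 1 → ∀ r ≥ 1,
      (1 - p) ^ n ≤ erProb n p (fun G => ¬ G.HasEdgeDisjointHamCycles r)) ∧
    (∀ ε > 0, ∀ c > √2, ∃ N : ℕ, ∀ n ≥ N, ∀ p : ℝ, 0 ≤ p → p ≤ 1 - ε → ∀ r ≥ 1,
      erProb n p (fun G => ¬ G.HasEdgeDisjointHamCycles r) ≤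
        (1 - p) ^ n * Real.exp (c * r * √n * Real.log n)) := by
  constructor
  · intro n hn p hp0 hp1 r hr
    have : NeZero n := ⟨by omega⟩
    rw [erProb_eq_binomialRandom_real ⟨p, hp0, hp1⟩]
    calc (1 - p) ^ n ≤ (1 - p) ^ (Fintype.card (Fin n) - 1) :=
          pow_le_pow_of_le_one (sub_nonneg.2 hp1) (sub_le_self _ hp0) (by simp)
      _ ≤ _ := pow_le_binomialRandom_real_not_hasEdgeDisjointHamCycles ⟨p, hp0, hp1⟩ hr
  · intro ε hε c hc
    obtain ⟨θ, hθ1, hθ2, hev⟩ := exists_eventually_ceil_mul_sqrt_bounds hc (-Real.log ε)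
    obtain ⟨N, hN⟩ := Filter.eventually_atTop.1 hev
    refine ⟨N, fun n hn p hp0 hp1 r hr => ?_⟩
    obtain ⟨m, rfl⟩ := Nat.exists_eq_add_of_le' hr
    obtain ⟨hs, hk, hΛ, hlog⟩ := hN n hn
    have hεp : ε ≤ 1 - p := by linarith
    have hp : 1 - p = Real.exp (-(-Real.log (1 - p))) := by
      rw [neg_neg, Real.exp_log (hε.trans_le hεp)]
    rw [erProb_eq_binomialRandom_real ⟨p, hp0, by linarith⟩]
    simpa using binomialRandom_real_not_hasEdgeDisjointHamCycles_le_exp_sqrt (V := Fin n)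
      (p := ⟨p, hp0, by linarith⟩) (m := m) hθ1 hθ2 (by linarith [Real.sqrt_nonneg 2]) hp
      (neg_nonneg.2 (Real.log_nonpos (by linarith) (by linarith)))
      (neg_le_neg (Real.log_le_log hε hεp)) (by simpa using hs) (by simpa using hk)
      (by simpa using hΛ) (by simpa using hlog)

theorem random_edge_disjoint_ham_cycles_failure_probability
    (ε : ℝ) (hε0 : 0 < ε) (hε1 : ε < 1)
    (p : ℕ → ℝ) (hp0 : ∀ n, 0 ≤ p n) (hp1 : ∀ n, p n ≤ 1 - ε)
    (r : ℕ → ℕ) (hr : ∀ n, 1 ≤ r n) :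
    (∀ n, 1 ≤ n →
      (1 - p n) ^ n ≤ erProb n (p n) (fun G => ¬ G.HasEdgeDisjointHamCycles (r n))) ∧
    (∀ c : ℝ, 2 < c → ∃ N : ℕ, ∀ n ≥ N,
      erProb n (p n) (fun G => ¬ G.HasEdgeDisjointHamCycles (r n)) ≤
        (1 - p n) ^ n * Real.exp (c * r n * Real.sqrt n * Real.log n)) := by
  obtain ⟨hlower, hupper⟩ := random_edge_disjoint_ham_cycles_failure_probability_general
  refine ⟨fun n hn => hlower n hn (p n) (hp0 n) (by linarith [hp1 n]) (r n) (hr n), fun c hc => ?_⟩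
  obtain ⟨N, hN⟩ := hupper ε hε0 c (by linarith [Real.sqrt_two_lt_three_halves])
  exact ⟨N, fun n hn => hN n hn (p n) (hp0 n) (hp1 n) (r n) (hr n)⟩
end
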